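/- There exists a constant C > 0, depending only on Ω, ω₀, ω and η⁰, such that for every T > 0, every bounded measurable potential a, and every classical nonnegative solution q of the adjoint heat equation with Neumann boundary condition, one has ∫_Ω q(0,x)² dx ≤ exp(C(1 + 1/T + T‖a‖_∞ + ‖a‖_∞^{1/2})) ∫₀^T ∫_ω q(t,x)² dx dt. -/

import Mathlib

/-!
Because `q ≥ 0`, one can work with the masses `∫ q` instead of the squares used in classical
Carleman estimates. Testing the equation against `exp (s η)` and integrating by parts twice produces
`s² ‖∇η‖² exp (s η)`, which dominates everything outside `ω`, while the boundary terms have a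
favourable sign: `q` satisfies the Neumann condition and `∇η` points inward. Hence
`t ↦ ∫ q(t) exp (s η)` obeys a differential inequality with a large rate `κ ~ s²` and a source
supported in `ω`. For `s` of order `1 / T + √A`, where `A` bounds the potential, the factor
`exp (κ T)` beats the oscillation of the weight, and `∫ q(0)` is controlled by the integral of `q`
over `(0, T) × ω`.

The passage from `∫ q` back to `∫ q²` is the smoothing effect of the heat flow, by Nash's method.
Nash's inequality is obtained by comparing `u x` with the values of `u` on the ball
`x + δ (∇η x + B(0, r))`, which stays inside `Ω` since `∇η` points inward.
-/

open MeasureTheory Real Set RealInnerProductSpace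

noncomputable def spaceLaplacian {N : ℕ} (f : EuclideanSpace ℝ (Fin N) → ℝ)
    (x : EuclideanSpace ℝ (Fin N)) : ℝ :=
  ∑ i : Fin N, fderiv ℝ (fun y => fderiv ℝ f y (EuclideanSpace.single i 1)) x
    (EuclideanSpace.single i 1)

section C1UpTo

variable {E F : Type*} [NormedAddCommGroup E] [NormedSpace ℝ E]
  [NormedAddCommGroup F] [NormedSpace ℝ F] {f g : E → F} {K : Set E}

/-- `f` is differentiable (in the full space) at every point of `K`, with a derivative continuous
on `K`. For `K = closure Ω` this is our notion of functions of class `C¹` up to the boundary. -/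
structure IsC1On (f : E → F) (K : Set E) : Prop where
  differentiableAt : ∀ x ∈ K, DifferentiableAt ℝ f x
  continuousOn_fderiv : ContinuousOn (fderiv ℝ f) K

/-- The second-order analogue of `IsC1On`: functions of class `C²` up to the boundary. -/
structure IsC2On (f : E → F) (K : Set E) : Prop where
  isC1On : IsC1On f K
  isC1On_fderiv : IsC1On (fderiv ℝ f) K

lemma IsC1On.continuousOn (hf : IsC1On f K) : ContinuousOn f K := fun x hx =>
  (hf.differentiableAt x hx).continuousAt.continuousWithinAt

lemma IsC1On.mono (hf : IsC1On f K) {L : Set E} (hL : L ⊆ K) : IsC1On f L :=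
  ⟨fun x hx => hf.differentiableAt x (hL hx), hf.continuousOn_fderiv.mono hL⟩

lemma IsC1On.sub (hf : IsC1On f K) (hg : IsC1On g K) : IsC1On (fun x => f x - g x) K where
  differentiableAt x hx := (hf.differentiableAt x hx).sub (hg.differentiableAt x hx)
  continuousOn_fderiv := (hf.continuousOn_fderiv.sub hg.continuousOn_fderiv).congr fun x hx =>
    fderiv_fun_sub (hf.differentiableAt x hx) (hg.differentiableAt x hx)

lemma IsC1On.smul {w : E → ℝ} (hw : IsC1On w K) (hf : IsC1On f K) :
    IsC1On (fun x => w x • f x) K where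
  differentiableAt x hx := (hw.differentiableAt x hx).smul (hf.differentiableAt x hx)
  continuousOn_fderiv := by
    have hcont : ContinuousOn
        (fun x => w x • fderiv ℝ f x + (fderiv ℝ w x).smulRight (f x)) K :=
      (hw.continuousOn.smul hf.continuousOn_fderiv).add
        ((ContinuousLinearMap.smulRightL ℝ E F).continuous₂.comp_continuousOn
          (hw.continuousOn_fderiv.prodMk hf.continuousOn))
    exact hcont.congr fun x hx =>
      fderiv_fun_smul (hw.differentiableAt x hx) (hf.differentiableAt x hx)

lemma IsC1On.clm_comp {G : Type*} [NormedAddCommGroup G] [NormedSpace ℝ G] (hf : IsC1On f K)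
    (L : F →L[ℝ] G) : IsC1On (fun x => L (f x)) K where
  differentiableAt x hx := L.differentiableAt.comp x (hf.differentiableAt x hx)
  continuousOn_fderiv :=
    (((ContinuousLinearMap.compL ℝ E F G) L).continuous.comp_continuousOn
      hf.continuousOn_fderiv).congr fun x hx =>
      (L.hasFDerivAt.comp x (hf.differentiableAt x hx).hasFDerivAt).fderiv

lemma IsC1On.neg (hf : IsC1On f K) : IsC1On (fun x => -f x) K :=
  hf.clm_comp (-ContinuousLinearMap.id ℝ F)

lemma isC1On_of_contDiff (hf : ContDiff ℝ 1 f) (K : Set E) : IsC1On f K :=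
  ⟨fun x _ => hf.differentiable one_ne_zero x,
    (hf.continuous_fderiv one_ne_zero).continuousOn⟩

lemma isC2On_of_contDiff (hf : ContDiff ℝ 2 f) (K : Set E) : IsC2On f K :=
  ⟨isC1On_of_contDiff (hf.of_le one_le_two) K,
    isC1On_of_contDiff (hf.fderiv_right (by norm_num)) K⟩

end C1UpTo

section Divergence

open scoped Gradient Laplacian

variable {E : Type*} [NormedAddCommGroup E] [InnerProductSpace ℝ E]
  {F : E → E} {f w : E → ℝ} {K : Set E} {x : E}

/-- The divergence of a vector field, encoded as the trace of its derivative. -/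
noncomputable def divergence (F : E → E) (x : E) : ℝ :=
  LinearMap.trace ℝ E (fderiv ℝ F x)

lemma divergence_eq_sum_inner {ι : Type*} [Fintype ι] (b : OrthonormalBasis ι ℝ E) (F : E → E)
    (x : E) : divergence F x = ∑ i, ⟪b i, fderiv ℝ F x (b i)⟫ :=
  LinearMap.trace_eq_sum_inner _ b

lemma divergence_sub {G : E → E} (hF : DifferentiableAt ℝ F x) (hG : DifferentiableAt ℝ G x) :
    divergence (fun y => F y - G y) x = divergence F x - divergence G x := by
  simp only [divergence, fderiv_fun_sub hF hG, ContinuousLinearMap.toLinearMap_sub, map_sub]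

variable [FiniteDimensional ℝ E]

lemma divergence_smul (hw : DifferentiableAt ℝ w x) (hF : DifferentiableAt ℝ F x) :
    divergence (fun y => w y • F y) x = w x * divergence F x + ⟪∇ w x, F x⟫ := by
  have b := stdOrthonormalBasis ℝ E
  have hinner : ⟪∇ w x, F x⟫ = ∑ i, fderiv ℝ w x (b i) * ⟪b i, F x⟫ := by
    simp only [← b.sum_inner_mul_inner (∇ w x) (F x), inner_gradient_left]
  rw [hinner, divergence_eq_sum_inner b, divergence_eq_sum_inner b, Finset.mul_sum,
    ← Finset.sum_add_distrib]
  refine Finset.sum_congr rfl fun i _ => ?_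
  simp [fderiv_fun_smul hw hF, inner_add_right, inner_smul_right]

/-- The Riesz map `E* → E`, as a linear map over `ℝ` (Mathlib's `InnerProductSpace.toDual` is
conjugate-linear). -/
noncomputable def rieszCLM (E : Type*) [NormedAddCommGroup E] [InnerProductSpace ℝ E]
    [CompleteSpace E] : (E →L[ℝ] ℝ) →L[ℝ] E where
  toFun := (InnerProductSpace.toDual ℝ E).symm
  map_add' := map_add _
  map_smul' c φ := by simp
  cont := (InnerProductSpace.toDual ℝ E).symm.continuous

lemma laplacian_eq_sum_fderiv_fderiv {ι : Type*} [Fintype ι] (b : OrthonormalBasis ι ℝ E)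
    (f : E → ℝ) (x : E) : Δ f x = ∑ i, fderiv ℝ (fderiv ℝ f) x (b i) (b i) := by
  simp only [InnerProductSpace.laplacian_eq_iteratedFDeriv_orthonormalBasis f b,
    iteratedFDeriv_two_apply, Matrix.cons_val_zero, Matrix.cons_val_one]

lemma divergence_gradient (hf : DifferentiableAt ℝ (fderiv ℝ f) x) :
    divergence (∇ f) x = Δ f x := by
  have b := stdOrthonormalBasis ℝ E
  have hderiv : HasFDerivAt (∇ f) ((rieszCLM E).comp (fderiv ℝ (fderiv ℝ f) x)) x :=
    (rieszCLM E).hasFDerivAt.comp x hf.hasFDerivAt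
  rw [divergence_eq_sum_inner b, laplacian_eq_sum_fderiv_fderiv b]
  refine Finset.sum_congr rfl fun i _ => ?_
  rw [hderiv.fderiv, real_inner_comm]
  exact InnerProductSpace.toDual_symm_apply

lemma IsC1On.continuousOn_divergence (hF : IsC1On F K) : ContinuousOn (divergence F) K :=
  ((LinearMap.trace ℝ E ∘ₗ ContinuousLinearMap.coeLM ℝ).continuous_of_finiteDimensional
    ).comp_continuousOn hF.continuousOn_fderiv

lemma IsC2On.isC1On_gradient (hf : IsC2On f K) : IsC1On (∇ f) K :=
  hf.isC1On_fderiv.clm_comp (rieszCLM E)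

end Divergence

section Domain

open scoped Gradient Topology
open Filter

variable {E : Type*} [NormedAddCommGroup E] [InnerProductSpace ℝ E] [FiniteDimensional ℝ E]

/-- A bounded open set `Ω` with `C²` boundary, presented by a defining function `η` which is
positive exactly inside; `∇η` is a nonvanishing inward normal field on the boundary. -/
structure IsBoundedC2Domain (Ω : Set E) (η : E → ℝ) : Prop where
  isOpen : IsOpen Ω
  isBounded : Bornology.IsBounded Ω
  contDiff : ContDiff ℝ 2 η
  pos : ∀ x ∈ Ω, 0 < η x
  eq_zero : ∀ x ∈ frontier Ω, η x = 0
  gradient_ne_zero : ∀ x ∈ frontier Ω, ∇ η x ≠ 0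

/-- A `C²` function vanishing near `∂Ω`, equal to `1` where `η ≥ 2ε`. -/
noncomputable def interiorCutoff (Ω : Set E) (η : E → ℝ) (ε : ℝ) : E → ℝ :=
  Ω.indicator fun x => smoothTransition (η x / ε - 1)

namespace IsBoundedC2Domain

variable {Ω : Set E} {η : E → ℝ} (h : IsBoundedC2Domain Ω η)

include h

lemma nonneg : ∀ x ∈ closure Ω, 0 ≤ η x := fun x hx => by
  rw [closure_eq_self_union_frontier] at hx
  exact hx.elim (fun hx => (h.pos x hx).le) fun hx => (h.eq_zero x hx).ge

lemma mem_of_mem_closure_of_pos {x : E} (hx : x ∈ closure Ω) (hpos : 0 < η x) : x ∈ Ω := by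
  rw [closure_eq_self_union_frontier] at hx
  exact hx.resolve_right fun hfr => hpos.ne' (h.eq_zero x hfr)

variable {ε : ℝ} (hε : 0 < ε)

include hε

lemma tsupport_interiorCutoff_subset : tsupport (interiorCutoff Ω η ε) ⊆ Ω := by
  have hsub : tsupport (interiorCutoff Ω η ε) ⊆ closure Ω ∩ {x | ε ≤ η x} := by
    refine closure_minimal (fun x hx => ?_)
      (isClosed_closure.inter (isClosed_le continuous_const h.contDiff.continuous))
    rw [interiorCutoff, support_indicator] at hx
    obtain ⟨hxΩ, hx⟩ := hx
    refine ⟨subset_closure hxΩ, ?_⟩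
    by_contra hlt
    refine hx (smoothTransition.zero_of_nonpos ?_)
    linarith [(div_lt_one hε).2 (not_le.1 hlt)]
  exact fun x hx => h.mem_of_mem_closure_of_pos (hsub hx).1 (hε.trans_le (hsub hx).2)

omit hε in
lemma interiorCutoff_eventuallyEq {x : E} (hx : x ∈ Ω) :
    interiorCutoff Ω η ε =ᶠ[𝓝 x] fun y => smoothTransition (η y / ε - 1) := by
  filter_upwards [h.isOpen.mem_nhds hx] with y hy using indicator_of_mem hy _

lemma contDiff_interiorCutoff : ContDiff ℝ 1 (interiorCutoff Ω η ε) :=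
  contDiff_iff_contDiffAt.2 fun x => by
    by_cases hx : x ∈ tsupport (interiorCutoff Ω η ε)
    swap
    · exact contDiffAt_const.congr_of_eventuallyEq (notMem_tsupport_iff_eventuallyEq.1 hx)
    exact ContDiffAt.congr_of_eventuallyEq
      (smoothTransition.contDiff.comp
        (((h.contDiff.of_le one_le_two).div_const ε).sub contDiff_const)).contDiffAt
      (h.interiorCutoff_eventuallyEq (h.tsupport_interiorCutoff_subset hε hx))

lemma hasCompactSupport_interiorCutoff : HasCompactSupport (interiorCutoff Ω η ε) :=
  h.isBounded.isCompact_closure.of_isClosed_subset (isClosed_tsupport _)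
    ((h.tsupport_interiorCutoff_subset hε).trans subset_closure)

omit hε in
lemma gradient_interiorCutoff {x : E} (hx : x ∈ Ω) :
    ∇ (interiorCutoff Ω η ε) x = (deriv smoothTransition (η x / ε - 1) / ε) • ∇ η x := by
  have hη : DifferentiableAt ℝ η x := h.contDiff.differentiable two_ne_zero x
  have hχ : HasDerivAt smoothTransition _ (η x / ε - 1) :=
    ((smoothTransition.contDiff (n := 1)).differentiable one_ne_zero _).hasDerivAt
  have harg : HasFDerivAt (fun y => η y / ε - 1) (ε⁻¹ • fderiv ℝ η x) x := by
    simpa only [div_eq_inv_mul] using (hη.hasFDerivAt.const_mul ε⁻¹).sub_const 1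
  have hcutoff : HasFDerivAt (interiorCutoff Ω η ε)
      (deriv smoothTransition (η x / ε - 1) • ε⁻¹ • fderiv ℝ η x) x :=
    (hχ.comp_hasFDerivAt x harg).congr_of_eventuallyEq (h.interiorCutoff_eventuallyEq hx)
  rw [gradient, hcutoff.fderiv, smul_smul, map_smulₛₗ, ← div_eq_mul_inv]
  rfl

lemma inner_gradient_interiorCutoff_nonpos {F : E → E} {ρ : ℝ} (hερ : 2 * ε < ρ)
    (hF : ∀ x ∈ Ω, η x < ρ → ⟪F x, ∇ η x⟫ ≤ 0) (x : E) :
    ⟪∇ (interiorCutoff Ω η ε) x, F x⟫ ≤ 0 := by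
  by_cases hx : x ∈ tsupport (interiorCutoff Ω η ε)
  swap
  · have hzero : ∇ (interiorCutoff Ω η ε) x = 0 := by
      rw [gradient, fderiv_of_notMem_tsupport ℝ hx, map_zero]
    rw [hzero, inner_zero_left]
  have hxΩ := h.tsupport_interiorCutoff_subset hε hx
  rw [h.gradient_interiorCutoff hxΩ, real_inner_smul_left, real_inner_comm]
  rcases lt_or_ge (η x) ρ with hlt | hge
  · exact mul_nonpos_of_nonneg_of_nonpos
      (div_nonneg smoothTransition.monotone.deriv_nonneg hε.le) (hF x hxΩ hlt)
  · have hone : smoothTransition =ᶠ[𝓝 (η x / ε - 1)] fun _ => 1 := by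
      have h1 : 1 < η x / ε - 1 := by
        rw [lt_sub_iff_add_lt, lt_div_iff₀ hε]; linarith
      filter_upwards [lt_mem_nhds h1] with r hr using smoothTransition.one_of_one_le hr.le
    simp only [hone.deriv_eq, deriv_const, zero_div, zero_mul, le_refl]

omit hε

lemma tendsto_interiorCutoff {x : E} (hx : x ∈ Ω) :
    Tendsto (fun ε => interiorCutoff Ω η ε x) (𝓝[>] 0) (𝓝 1) := by
  have hsmall : ∀ᶠ ε in 𝓝[>] (0 : ℝ), ε < η x / 2 :=
    nhdsWithin_le_nhds (eventually_lt_nhds (half_pos (h.pos x hx)))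
  refine tendsto_const_nhds.congr' ?_
  filter_upwards [hsmall, self_mem_nhdsWithin] with ε hlt hpos
  have h1 : 1 ≤ η x / ε - 1 := by
    rw [le_sub_iff_add_le, le_div_iff₀ hpos]; linarith
  exact ((indicator_of_mem hx _).trans (smoothTransition.one_of_one_le h1)).symm

end IsBoundedC2Domain

end Domain

section IntegrationByParts

open scoped Gradient Laplacian Topology
open Filter

variable {E : Type*} [NormedAddCommGroup E] [InnerProductSpace ℝ E] [FiniteDimensional ℝ E]
  [MeasurableSpace E] [BorelSpace E]

lemma integrableOn_of_continuousOn_closure {X G : Type*} [MetricSpace X] [ProperSpace X]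
    [MeasurableSpace X] [OpensMeasurableSpace X] {μ : Measure X} [IsFiniteMeasureOnCompacts μ]
    [NormedAddCommGroup G] {Ω : Set X} (hΩ : Bornology.IsBounded Ω) {f : X → G}
    (hf : ContinuousOn f (closure Ω)) : IntegrableOn f Ω μ :=
  (hf.integrableOn_compact hΩ.isCompact_closure).mono_set subset_closure

lemma integral_mul_divergence_of_tsupport_subset {U : Set E} (hU : IsOpen U) {c : E → ℝ}
    (hc : ContDiff ℝ 1 c) (hcomp : HasCompactSupport c) (hsupp : tsupport c ⊆ U) {F : E → E}
    (hF : IsC1On F U) : ∫ x, c x * divergence F x = -∫ x, ⟪∇ c x, F x⟫ := by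
  have b := stdOrthonormalBasis ℝ E
  have integrable_of_tsupport {g : E → E} (hg : ContinuousOn g U) (hgc : tsupport g ⊆ tsupport c) :
      Integrable g :=
    (hg.continuous_of_tsupport_subset hU (hgc.trans hsupp)).integrable_of_hasCompactSupport
      (hcomp.of_isClosed_subset (isClosed_tsupport g) hgc)
  have hint_left (v : E) : Integrable fun x => fderiv ℝ c x v • F x :=
    integrable_of_tsupport
      (((hc.continuous_fderiv one_ne_zero).clm_apply continuous_const).continuousOn.smul
        hF.continuousOn)
      ((tsupport_smul_subset_left _ _).trans (tsupport_fderiv_apply_subset ℝ v))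
  have hint_right (v : E) : Integrable fun x => c x • fderiv ℝ F x v :=
    integrable_of_tsupport
      (hc.continuous.continuousOn.smul (hF.continuousOn_fderiv.clm_apply continuousOn_const))
      (tsupport_smul_subset_left _ _)
  have hparts (v : E) : ∫ x, c x • fderiv ℝ F x v = -∫ x, fderiv ℝ c x v • F x :=
    integral_smul_fderiv_eq_neg_fderiv_smul_of_integrable (hint_left v) (hint_right v)
      (integrable_of_tsupport (hc.continuous.continuousOn.smul hF.continuousOn)
        (tsupport_smul_subset_left _ _))
      (fun x _ => hc.differentiable one_ne_zero x) fun x hx => hF.differentiableAt x (hsupp hx)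
  calc ∫ x, c x * divergence F x
      = ∑ i, ∫ x, ⟪b i, c x • fderiv ℝ F x (b i)⟫ := by
        rw [← integral_finsetSum _ fun i _ => (hint_right (b i)).const_inner (b i)]
        simp only [divergence_eq_sum_inner b, Finset.mul_sum, inner_smul_right]
    _ = ∑ i, -∫ x, ⟪b i, fderiv ℝ c x (b i) • F x⟫ := by
        refine Finset.sum_congr rfl fun i _ => ?_
        rw [integral_inner (hint_right _), hparts, inner_neg_right, integral_inner (hint_left _)]
    _ = -∫ x, ⟪∇ c x, F x⟫ := by
        rw [Finset.sum_neg_distrib,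
          ← integral_finsetSum _ fun i _ => (hint_left (b i)).const_inner (b i)]
        simp only [inner_smul_right, ← inner_gradient_left, b.sum_inner_mul_inner]

namespace IsBoundedC2Domain

variable {Ω : Set E} {η : E → ℝ} (h : IsBoundedC2Domain Ω η)

include h

lemma tendsto_integral_interiorCutoff_mul {g : E → ℝ} (hg : ContinuousOn g (closure Ω)) :
    Tendsto (fun ε => ∫ x, interiorCutoff Ω η ε x * g x) (𝓝[>] 0) (𝓝 (∫ x in Ω, g x)) := by
  have hint : IntegrableOn g Ω := integrableOn_of_continuousOn_closure h.isBounded hg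
  have hrestrict (ε : ℝ) : ∫ x, interiorCutoff Ω η ε x * g x
      = ∫ x in Ω, interiorCutoff Ω η ε x * g x := by
    refine (setIntegral_eq_integral_of_forall_compl_eq_zero fun x hx => ?_).symm
    rw [interiorCutoff, indicator_of_notMem hx, zero_mul]
  simp only [hrestrict]
  refine tendsto_integral_filter_of_dominated_convergence (fun x => ‖g x‖) ?_ ?_ hint.norm ?_
  · filter_upwards [self_mem_nhdsWithin] with ε hε
    exact (h.contDiff_interiorCutoff hε).continuous.aestronglyMeasurable.mul
      hint.aestronglyMeasurable
  · refine Eventually.of_forall fun ε => Eventually.of_forall fun x => ?_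
    have hle : ‖interiorCutoff Ω η ε x‖ ≤ 1 :=
      (norm_indicator_le_norm_self _ x).trans
        (abs_le.2 ⟨by linarith [smoothTransition.nonneg (η x / ε - 1)], smoothTransition.le_one _⟩)
    rw [norm_mul]
    exact mul_le_of_le_one_left (norm_nonneg _) hle
  · filter_upwards [ae_restrict_mem h.isOpen.measurableSet] with x hx
    simpa only [one_mul] using (h.tendsto_interiorCutoff hx).mul_const (g x)

lemma integral_divergence_nonneg_of_neg {F : E → E} (hF : IsC1On F (closure Ω))
    (hneg : ∀ x ∈ frontier Ω, ⟪F x, ∇ η x⟫ < 0) : 0 ≤ ∫ x in Ω, divergence F x := by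
  obtain ⟨ρ, hρ, hcollar⟩ : ∃ ρ > 0, ∀ x ∈ Ω, η x < ρ → ⟪F x, ∇ η x⟫ ≤ 0 := by
    have hcont : ContinuousOn (fun x => ⟪F x, ∇ η x⟫) (closure Ω) :=
      hF.continuousOn.inner ((isC2On_of_contDiff h.contDiff _).isC1On_gradient.continuousOn)
    have hcompact : IsCompact (closure Ω ∩ (fun x => ⟪F x, ∇ η x⟫) ⁻¹' Ici 0) :=
      h.isBounded.isCompact_closure.of_isClosed_subset
        (hcont.preimage_isClosed_of_isClosed isClosed_closure isClosed_Ici) inter_subset_left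
    obtain ⟨ρ, hρ, hle⟩ := hcompact.exists_forall_le' h.contDiff.continuous.continuousOn
      (a := 0) fun x hx => by
        rcases closure_eq_self_union_frontier Ω ▸ hx.1 with hxΩ | hxfr
        · exact h.pos x hxΩ
        · exact absurd hx.2 (hneg x hxfr).not_ge
    exact ⟨ρ, hρ, fun x hx hlt => not_lt.1 fun hpos =>
      (hle x ⟨subset_closure hx, hpos.le⟩).not_gt hlt⟩
  refine ge_of_tendsto (h.tendsto_integral_interiorCutoff_mul hF.continuousOn_divergence) ?_
  have hsmall : ∀ᶠ ε in 𝓝[>] (0 : ℝ), ε < ρ / 2 :=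
    nhdsWithin_le_nhds (eventually_lt_nhds (half_pos hρ))
  filter_upwards [hsmall, self_mem_nhdsWithin] with ε hlt hε
  rw [integral_mul_divergence_of_tsupport_subset h.isOpen (h.contDiff_interiorCutoff hε)
    (h.hasCompactSupport_interiorCutoff hε) (h.tsupport_interiorCutoff_subset hε)
    (hF.mono subset_closure), neg_nonneg]
  exact integral_nonpos fun x =>
    h.inner_gradient_interiorCutoff_nonpos hε (by linarith) hcollar x

-- The boundary terms are never computed: only their sign is used, after tilting the field inward.
lemma integral_divergence_nonneg {F : E → E} (hF : IsC1On F (closure Ω))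
    (hnonpos : ∀ x ∈ frontier Ω, ⟪F x, ∇ η x⟫ ≤ 0) : 0 ≤ ∫ x in Ω, divergence F x := by
  have hgrad : IsC1On (∇ η) (closure Ω) := (isC2On_of_contDiff h.contDiff _).isC1On_gradient
  have htilt (σ : ℝ) (hσ : 0 < σ) :
      0 ≤ (∫ x in Ω, divergence F x) - σ * ∫ x in Ω, divergence (∇ η) x := by
    have hσgrad : IsC1On (fun x => σ • ∇ η x) (closure Ω) :=
      (isC1On_of_contDiff contDiff_const _).smul hgrad
    have hdiv : ∀ x ∈ closure Ω, divergence (fun y => F y - σ • ∇ η y) x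
        = divergence F x - σ * divergence (∇ η) x := fun x hx => by
      have hgradient_const : ∇ (fun _ : E => σ) x = 0 := gradient_const x σ
      rw [divergence_sub (hF.differentiableAt x hx) (hσgrad.differentiableAt x hx),
        divergence_smul (differentiableAt_const σ) (hgrad.differentiableAt x hx),
        hgradient_const, inner_zero_left, add_zero]
    have hpos := h.integral_divergence_nonneg_of_neg (hF.sub hσgrad) fun x hx => by
      have hnorm : 0 < ‖∇ η x‖ ^ 2 := by
        have := h.gradient_ne_zero x hx
        positivity
      rw [inner_sub_left, real_inner_smul_left, real_inner_self_eq_norm_sq]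
      linarith [hnonpos x hx, mul_pos hσ hnorm]
    rwa [setIntegral_congr_fun h.isOpen.measurableSet fun x hx => hdiv x (subset_closure hx),
      integral_sub, integral_const_mul] at hpos
    · exact integrableOn_of_continuousOn_closure h.isBounded hF.continuousOn_divergence
    · exact (integrableOn_of_continuousOn_closure h.isBounded
        hgrad.continuousOn_divergence).const_mul σ
  have hlim : Tendsto (fun σ => (∫ x in Ω, divergence F x) - σ * ∫ x in Ω, divergence (∇ η) x)
      (𝓝[>] 0) (𝓝 (∫ x in Ω, divergence F x)) := by
    refine Tendsto.mono_left ?_ nhdsWithin_le_nhds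
    exact Continuous.tendsto' (by fun_prop) _ _ (by simp)
  exact ge_of_tendsto hlim (eventually_mem_nhdsWithin.mono htilt)

end IsBoundedC2Domain

end IntegrationByParts

section Green

open scoped Gradient Laplacian

section Calculus

variable {E : Type*} [NormedAddCommGroup E] [InnerProductSpace ℝ E] [FiniteDimensional ℝ E]
  {f η : E → ℝ} {K : Set E}

lemma gradient_fun_neg (f : E → ℝ) (x : E) : ∇ (fun y => -f y) x = -∇ f x := by
  rw [gradient, fderiv_fun_neg, map_neg, gradient]

lemma IsC2On.continuousOn_laplacian (hf : IsC2On f K) : ContinuousOn (Δ f) K :=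
  hf.isC1On_gradient.continuousOn_divergence.congr fun x hx =>
    (divergence_gradient (hf.isC1On_fderiv.differentiableAt x hx)).symm

lemma gradient_exp_mul {x : E} (hη : DifferentiableAt ℝ η x) (s : ℝ) :
    ∇ (fun y => exp (s * η y)) x = (s * exp (s * η x)) • ∇ η x := by
  have hderiv : HasFDerivAt (fun y => exp (s * η y)) (exp (s * η x) • s • fderiv ℝ η x) x :=
    (hη.hasFDerivAt.const_mul s).exp
  rw [gradient, hderiv.fderiv, smul_smul, map_smulₛₗ, mul_comm]
  rfl

lemma laplacian_exp_mul (hη : ContDiff ℝ 2 η) (s : ℝ) (x : E) :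
    Δ (fun y => exp (s * η y)) x = exp (s * η x) * (s * Δ η x + s ^ 2 * ‖∇ η x‖ ^ 2) := by
  have hexp : IsC2On (fun y => exp (s * η y)) univ := isC2On_of_contDiff (by fun_prop) univ
  have hη' := isC2On_of_contDiff hη univ
  have hdiff (y : E) : DifferentiableAt ℝ η y := hη.differentiable two_ne_zero y
  have hgrad : ∇ (fun y => exp (s * η y)) = fun y => (s * exp (s * η y)) • ∇ η y :=
    funext fun y => gradient_exp_mul (hdiff y) s
  have hweight : ∇ (fun y => s * exp (s * η y)) x = (s ^ 2 * exp (s * η x)) • ∇ η x := by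
    have hderiv : HasFDerivAt (fun y => s * exp (s * η y))
        (s • exp (s * η x) • s • fderiv ℝ η x) x :=
      ((hdiff x).hasFDerivAt.const_mul s).exp.const_mul s
    rw [gradient, hderiv.fderiv, smul_smul, smul_smul, map_smulₛₗ, gradient]
    congr 1
    simp only [conj_trivial]
    ring
  rw [← divergence_gradient (hexp.isC1On_fderiv.differentiableAt x (mem_univ x)), hgrad,
    divergence_smul (((hdiff x).const_mul s).exp.const_mul s)
      (hη'.isC1On_gradient.differentiableAt x (mem_univ x)),
    divergence_gradient (hη'.isC1On_fderiv.differentiableAt x (mem_univ x)), hweight,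
    real_inner_smul_left, real_inner_self_eq_norm_sq]
  ring

end Calculus

namespace IsBoundedC2Domain

variable {E : Type*} [NormedAddCommGroup E] [InnerProductSpace ℝ E] [FiniteDimensional ℝ E]
  [MeasurableSpace E] [BorelSpace E] {Ω : Set E} {η f g w : E → ℝ} (h : IsBoundedC2Domain Ω η)

include h

lemma neg_integral_inner_gradient_le (hw : IsC1On w (closure Ω)) (hf : IsC2On f (closure Ω))
    (hbd : ∀ x ∈ frontier Ω, w x * ⟪∇ f x, ∇ η x⟫ ≤ 0) :
    -∫ x in Ω, ⟪∇ w x, ∇ f x⟫ ≤ ∫ x in Ω, w x * Δ f x := by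
  have hdiv : ∀ x ∈ closure Ω, divergence (fun y => w y • ∇ f y) x
      = w x * Δ f x + ⟪∇ w x, ∇ f x⟫ := fun x hx => by
    rw [divergence_smul (hw.differentiableAt x hx) (hf.isC1On_gradient.differentiableAt x hx),
      divergence_gradient (hf.isC1On_fderiv.differentiableAt x hx)]
  have hnonneg := h.integral_divergence_nonneg (hw.smul hf.isC1On_gradient) fun x hx => by
    simpa only [real_inner_smul_left] using hbd x hx
  have hgradw : ContinuousOn (∇ w) (closure Ω) :=
    (rieszCLM E).continuous.comp_continuousOn hw.continuousOn_fderiv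
  rw [setIntegral_congr_fun h.isOpen.measurableSet fun x hx => hdiv x (subset_closure hx),
    integral_add] at hnonneg
  · linarith
  · exact integrableOn_of_continuousOn_closure h.isBounded
      (hw.continuousOn.mul hf.continuousOn_laplacian)
  · exact integrableOn_of_continuousOn_closure h.isBounded
      (hgradw.inner hf.isC1On_gradient.continuousOn)

lemma integral_mul_laplacian (hw : IsC1On w (closure Ω)) (hf : IsC2On f (closure Ω))
    (hneumann : ∀ x ∈ frontier Ω, ⟪∇ f x, ∇ η x⟫ = 0) :
    ∫ x in Ω, w x * Δ f x = -∫ x in Ω, ⟪∇ w x, ∇ f x⟫ := by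
  refine le_antisymm ?_ (h.neg_integral_inner_gradient_le hw hf fun x hx => by
    rw [hneumann x hx, mul_zero])
  have hneg := h.neg_integral_inner_gradient_le hw.neg hf fun x hx => by
    rw [hneumann x hx, mul_zero]
  simp only [gradient_fun_neg, inner_neg_left, neg_mul, integral_neg, neg_neg] at hneg
  linarith

lemma integral_laplacian_eq_zero (hf : IsC2On f (closure Ω))
    (hneumann : ∀ x ∈ frontier Ω, ⟪∇ f x, ∇ η x⟫ = 0) : ∫ x in Ω, Δ f x = 0 := by
  have hgradient_one (x : E) : ∇ (fun _ : E => (1 : ℝ)) x = 0 := gradient_const x 1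
  simpa only [one_mul, hgradient_one, inner_zero_left, integral_zero, neg_zero] using
    h.integral_mul_laplacian (isC1On_of_contDiff contDiff_const _ : IsC1On (fun _ => (1 : ℝ)) _)
      hf hneumann

lemma integral_self_mul_laplacian (hf : IsC2On f (closure Ω))
    (hneumann : ∀ x ∈ frontier Ω, ⟪∇ f x, ∇ η x⟫ = 0) :
    ∫ x in Ω, f x * Δ f x = -∫ x in Ω, ‖∇ f x‖ ^ 2 := by
  simpa only [real_inner_self_eq_norm_sq] using h.integral_mul_laplacian hf.isC1On hf hneumann

lemma integral_mul_laplacian_le (hf : IsC2On f (closure Ω)) (hg : IsC2On g (closure Ω))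
    (hf_nonneg : ∀ x ∈ frontier Ω, 0 ≤ f x) (hneumann : ∀ x ∈ frontier Ω, ⟪∇ f x, ∇ η x⟫ = 0)
    (hg_inward : ∀ x ∈ frontier Ω, 0 ≤ ⟪∇ g x, ∇ η x⟫) :
    ∫ x in Ω, f x * Δ g x ≤ ∫ x in Ω, g x * Δ f x := by
  have hneg := h.neg_integral_inner_gradient_le hf.isC1On.neg hg fun x hx => by
      simpa using mul_nonneg (hf_nonneg x hx) (hg_inward x hx)
  simp only [gradient_fun_neg,
    inner_neg_left, neg_mul, integral_neg, neg_neg] at hneg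
  rw [h.integral_mul_laplacian hg.isC1On hf hneumann]
  simp only [real_inner_comm (∇ f _)] at hneg ⊢
  linarith

-- The weight `exp (s η)` has inward gradient, so the boundary term has a favourable sign.
lemma integral_exp_weight_le (hf : IsC2On f (closure Ω)) (hf_nonneg : ∀ x ∈ frontier Ω, 0 ≤ f x)
    (hneumann : ∀ x ∈ frontier Ω, ⟪∇ f x, ∇ η x⟫ = 0) {s : ℝ} (hs : 0 ≤ s) :
    ∫ x in Ω, f x * (exp (s * η x) * (s * Δ η x + s ^ 2 * ‖∇ η x‖ ^ 2))
      ≤ ∫ x in Ω, exp (s * η x) * Δ f x := by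
  have hη := h.contDiff
  have hweight : IsC2On (fun y => exp (s * η y)) (closure Ω) :=
    isC2On_of_contDiff (by fun_prop) _
  simp only [← laplacian_exp_mul hη]
  refine h.integral_mul_laplacian_le hf hweight hf_nonneg hneumann fun x _ => ?_
  rw [gradient_exp_mul (hη.differentiable two_ne_zero x), real_inner_smul_left,
    real_inner_self_eq_norm_sq]
  positivity

end IsBoundedC2Domain

end Green

section SquareIntegrals

variable {α : Type*} [MeasurableSpace α] {μ : Measure α}

lemma sq_integral_le_measureReal_mul_integral_sq [IsFiniteMeasure μ] {f : α → ℝ}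
    (hf : MemLp f 2 μ) :
    (∫ x, f x ∂μ) ^ 2 ≤ μ.real univ * ∫ x, f x ^ 2 ∂μ := by
  set m := μ.real univ
  set I := ∫ x, f x ∂μ
  have hint : Integrable f μ := hf.integrable one_le_two
  have hsq : Integrable (fun x => f x ^ 2) μ := hf.integrable_sq
  have hexpand : ∫ x, (m * f x - I) ^ 2 ∂μ = m * (m * ∫ x, f x ^ 2 ∂μ - I ^ 2) := by
    calc ∫ x, (m * f x - I) ^ 2 ∂μ
        = ∫ x, (m ^ 2 * f x ^ 2 - 2 * m * I * f x + I ^ 2) ∂μ := by congr with x; ring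
      _ = m ^ 2 * ∫ x, f x ^ 2 ∂μ - 2 * m * I * I + m * I ^ 2 := by
        rw [integral_add (by fun_prop) (by fun_prop), integral_sub (by fun_prop) (by fun_prop),
          integral_const_mul, integral_const_mul, integral_const, smul_eq_mul]
      _ = _ := by ring
  have hnonneg : 0 ≤ m * (m * ∫ x, f x ^ 2 ∂μ - I ^ 2) :=
    hexpand ▸ integral_nonneg fun x => sq_nonneg _
  rcases (measureReal_nonneg : 0 ≤ m).eq_or_lt with hm | hm
  · have hμ : μ = 0 := Measure.measure_univ_eq_zero.1 ((measureReal_eq_zero_iff).1 hm.symm)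
    simp [I, hμ]
  · exact sub_nonneg.1 (nonneg_of_mul_nonneg_right hnonneg hm)

lemma ofReal_integral_norm_sq_eq_lintegral {F : Type*} [NormedAddCommGroup F] {f : α → F}
    (hf : Integrable (fun x => ‖f x‖ ^ 2) μ) :
    ENNReal.ofReal (∫ x, ‖f x‖ ^ 2 ∂μ) = ∫⁻ x, ‖f x‖ₑ ^ 2 ∂μ := by
  rw [ofReal_integral_eq_lintegral_ofReal hf (.of_forall fun x => sq_nonneg _)]
  exact lintegral_congr fun x => by rw [ENNReal.ofReal_pow (norm_nonneg _), ofReal_norm]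

end SquareIntegrals

section Segments

variable {E F : Type*} [NormedAddCommGroup E] [NormedSpace ℝ E]
  [NormedAddCommGroup F] [NormedSpace ℝ F] {Ω : Set E} {x b : E} {δ : ℝ}

lemma IsC1On.continuousOn_fderiv_segment {u : E → F} (hu : IsC1On u Ω)
    (hseg : ∀ t ∈ Icc 0 δ, x + t • b ∈ Ω) :
    ContinuousOn (fun t : ℝ => fderiv ℝ u (x + t • b)) (Icc 0 δ) :=
  hu.continuousOn_fderiv.comp (by fun_prop) hseg

variable {u : E → ℝ}

lemma IsC1On.sq_sub_le_integral_segment (hu : IsC1On u Ω) (hδ : 0 ≤ δ)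
    (hseg : ∀ t ∈ Icc 0 δ, x + t • b ∈ Ω) :
    (u (x + δ • b) - u x) ^ 2 ≤ δ * ‖b‖ ^ 2 * ∫ t in Ioc 0 δ, ‖fderiv ℝ u (x + t • b)‖ ^ 2 := by
  have hcont := hu.continuousOn_fderiv_segment hseg
  have happ : ContinuousOn (fun t : ℝ => fderiv ℝ u (x + t • b) b) (Icc 0 δ) :=
    hcont.clm_apply continuousOn_const
  have hderiv : ∀ t ∈ uIcc 0 δ,
      HasDerivAt (fun t : ℝ => u (x + t • b)) (fderiv ℝ u (x + t • b) b) t := fun t ht => by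
    have hline : HasDerivAt (fun t : ℝ => x + t • b) b t := by
      simpa using ((hasDerivAt_id t).smul_const b).const_add x
    rw [uIcc_of_le hδ] at ht
    exact (hu.differentiableAt _ (hseg t ht)).hasFDerivAt.comp_hasDerivAt t hline
  have hFTC : ∫ t in Ioc 0 δ, fderiv ℝ u (x + t • b) b = u (x + δ • b) - u x := by
    rw [← intervalIntegral.integral_of_le hδ, intervalIntegral.integral_eq_sub_of_hasDerivAt hderiv
      (happ.intervalIntegrable_of_Icc hδ), zero_smul, add_zero]
  have hLp : MemLp (fun t => fderiv ℝ u (x + t • b) b) 2 (volume.restrict (Ioc 0 δ)) :=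
    (memLp_two_iff_integrable_sq
      ((happ.mono Ioc_subset_Icc_self).aestronglyMeasurable measurableSet_Ioc)).2
      ((happ.pow 2).integrableOn_Icc.mono_set Ioc_subset_Icc_self)
  calc (u (x + δ • b) - u x) ^ 2
      ≤ δ * ∫ t in Ioc 0 δ, (fderiv ℝ u (x + t • b) b) ^ 2 := by
        simpa [hFTC, hδ] using sq_integral_le_measureReal_mul_integral_sq hLp
    _ ≤ δ * ∫ t in Ioc 0 δ, ‖b‖ ^ 2 * ‖fderiv ℝ u (x + t • b)‖ ^ 2 := by
        refine mul_le_mul_of_nonneg_left (setIntegral_mono_on ?_ ?_ measurableSet_Ioc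
          fun t _ => ?_) hδ
        · exact (happ.pow 2).integrableOn_Icc.mono_set Ioc_subset_Icc_self
        · exact (continuousOn_const.mul (hcont.norm.pow 2)).integrableOn_Icc.mono_set
            Ioc_subset_Icc_self
        · rw [← mul_pow, mul_comm, ← sq_abs, ← norm_eq_abs]
          exact pow_le_pow_left₀ (norm_nonneg _) ((fderiv ℝ u _).le_opNorm b) 2
    _ = _ := by rw [integral_const_mul, mul_assoc]

lemma IsC1On.enorm_sq_le_lintegral_segment (hu : IsC1On u Ω) (hδ : 0 ≤ δ) {B : ℝ} (hb : ‖b‖ ≤ B)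
    (hseg : ∀ t ∈ Icc 0 δ, x + t • b ∈ Ω) :
    ‖u x‖ₑ ^ 2 ≤ 2 * (‖u x‖ₑ * ‖u (x + δ • b)‖ₑ) +
      ENNReal.ofReal (δ * B ^ 2) * ∫⁻ t in Ioc 0 δ, ‖fderiv ℝ u (x + t • b)‖ₑ ^ 2 := by
  have hint : IntegrableOn (fun t => ‖fderiv ℝ u (x + t • b)‖ ^ 2) (Ioc 0 δ) :=
    ((hu.continuousOn_fderiv_segment hseg).norm.pow 2).integrableOn_Icc.mono_set
      Ioc_subset_Icc_self
  have hI : 0 ≤ ∫ t in Ioc 0 δ, ‖fderiv ℝ u (x + t • b)‖ ^ 2 :=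
    integral_nonneg fun t => sq_nonneg _
  have hreal : |u x| ^ 2 ≤ 2 * (|u x| * |u (x + δ • b)|) +
      δ * B ^ 2 * ∫ t in Ioc 0 δ, ‖fderiv ℝ u (x + t • b)‖ ^ 2 := by
    have hsq := hu.sq_sub_le_integral_segment hδ hseg
    have hbB : δ * ‖b‖ ^ 2 ≤ δ * B ^ 2 := by gcongr
    have hprod : u x * u (x + δ • b) ≤ |u x| * |u (x + δ • b)| :=
      (le_abs_self _).trans (abs_mul _ _).le
    nlinarith [mul_le_mul_of_nonneg_right hbB hI, sq_abs (u x), sq_nonneg (u (x + δ • b))]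
  rw [← ofReal_integral_norm_sq_eq_lintegral hint]
  simp only [← ofReal_norm, norm_eq_abs]
  rw [← ENNReal.ofReal_pow (abs_nonneg _), ← ENNReal.ofReal_mul (abs_nonneg _),
    ← ENNReal.ofReal_ofNat 2, ← ENNReal.ofReal_mul zero_le_two,
    ← ENNReal.ofReal_mul (by positivity), ← ENNReal.ofReal_add (by positivity) (by positivity)]
  exact ENNReal.ofReal_le_ofReal hreal

end Segments

section ChangeOfVariables

open Module (finrank)
open scoped ENNReal NNReal

variable {E : Type*} [NormedAddCommGroup E] [NormedSpace ℝ E] [FiniteDimensional ℝ E]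
  [MeasurableSpace E] [BorelSpace E] (μ : Measure E) [μ.IsAddHaarMeasure] {F : E → ℝ≥0∞}

lemma lintegral_comp_add_smul (hF : Measurable F) (p : E) {r : ℝ} (hr : 0 < r) :
    ∫⁻ z, F (p + r • z) ∂μ = ENNReal.ofReal ((r ^ finrank ℝ E)⁻¹) * ∫⁻ y, F y ∂μ := by
  have hmap := lintegral_map (μ := μ) (hF.comp (measurable_const_add p)) (measurable_const_smul r)
  rw [Measure.map_addHaar_smul _ hr.ne', lintegral_smul_measure, abs_of_pos (by positivity)]
    at hmap
  exact hmap.symm.trans (congrArg _ (lintegral_add_left_eq_self F p))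

lemma addHaar_inter_preimage_le_of_antilipschitzWith {S : Set E} {Φ : E → E} {K : ℝ≥0}
    (hΦ : AntilipschitzWith K (S.domRestrict Φ)) (A : Set E) :
    μ (Φ ⁻¹' A ∩ S) ≤ K ^ finrank ℝ E * μ A := by
  have himage : Φ ⁻¹' A ∩ S = Subtype.val '' (S.domRestrict Φ ⁻¹' A) := by
    rw [inter_comm, domRestrict_eq, preimage_comp, Subtype.image_preimage_coe]
  have hle : Measure.hausdorffMeasure (finrank ℝ E) (Φ ⁻¹' A ∩ S) ≤
      K ^ finrank ℝ E * Measure.hausdorffMeasure (finrank ℝ E) A := by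
    rw [himage, isometry_subtype_coe.hausdorffMeasure_image (.inl (Nat.cast_nonneg _)),
      ← ENNReal.rpow_natCast]
    exact hΦ.hausdorffMeasure_preimage_le (Nat.cast_nonneg _) A
  rw [Measure.isAddLeftInvariant_eq_smul μ (Measure.hausdorffMeasure (finrank ℝ E))]
  simp only [Measure.smul_apply, mul_smul_comm]
  gcongr

lemma setLIntegral_comp_le_of_antilipschitzWith {S : Set E} {Φ : E → E} {K : ℝ≥0}
    (hm : Measurable Φ) (hΦ : AntilipschitzWith K (S.domRestrict Φ)) (hF : Measurable F) :
    ∫⁻ x in S, F (Φ x) ∂μ ≤ K ^ finrank ℝ E * ∫⁻ y, F y ∂μ := by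
  have hmap : (μ.restrict S).map Φ ≤ (K : ℝ≥0∞) ^ finrank ℝ E • μ := Measure.le_iff.2 fun A hA => by
    rw [Measure.map_apply hm hA, Measure.restrict_apply (hm hA)]
    exact addHaar_inter_preimage_le_of_antilipschitzWith μ hΦ A
  rw [← lintegral_map hF hm, ← smul_eq_mul, ← lintegral_smul_measure]
  exact lintegral_mono' hmap le_rfl

end ChangeOfVariables

section Nash

open Module (finrank)
open scoped ENNReal NNReal Gradient Topology
open Metric (ball)
open Filter

variable {E : Type*} [NormedAddCommGroup E]

/-- A quantitative interior cone condition: every point `x ∈ Ω` can be moved for a time at most `δ`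
along any direction within `r` of `g x` without leaving `Ω`, and moving all points along `g` for
such a time contracts distances at most by a factor `2`. -/
structure IsInwardField [NormedSpace ℝ E] (Ω : Set E) (g : E → E) (δ r B : ℝ) : Prop where
  continuous : Continuous g
  norm_add_le : ∀ x ∈ Ω, ∀ z ∈ ball (0 : E) r, ‖g x + z‖ ≤ B
  add_smul_mem : ∀ x ∈ Ω, ∀ z ∈ ball (0 : E) r, ∀ t ∈ Icc 0 δ, x + t • (g x + z) ∈ Ω
  antilipschitz : ∀ t ∈ Icc 0 δ, ∀ x ∈ Ω, ∀ y ∈ Ω,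
    ‖x - y‖ ≤ 2 * ‖(x + t • g x) - (y + t • g y)‖

lemma measurable_indicator_of_continuousOn {X : Type*} [TopologicalSpace X] [MeasurableSpace X]
    [OpensMeasurableSpace X] {S : Set X} (hS : MeasurableSet S) {f : X → ℝ≥0∞}
    (hf : ContinuousOn f S) : Measurable (S.indicator f) := by
  classical
  rw [← piecewise_eq_indicator]
  exact hf.measurable_piecewise continuousOn_const hS

namespace IsInwardField

lemma mono [NormedSpace ℝ E] {Ω : Set E} {g : E → E} {δ₀ r B : ℝ}
    (hg : IsInwardField Ω g δ₀ r B) {δ : ℝ} (hδ : δ ≤ δ₀) : IsInwardField Ω g δ r B where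
  continuous := hg.continuous
  norm_add_le := hg.norm_add_le
  add_smul_mem x hx z hz t ht := hg.add_smul_mem x hx z hz t ⟨ht.1, ht.2.trans hδ⟩
  antilipschitz t ht := hg.antilipschitz t ⟨ht.1, ht.2.trans hδ⟩

variable [NormedSpace ℝ E] [FiniteDimensional ℝ E] [MeasurableSpace E] [BorelSpace E]
  {μ : Measure E} [μ.IsAddHaarMeasure] {Ω : Set E} {g : E → E} {δ r B : ℝ} {F : E → ℝ≥0∞}

lemma setLIntegral_comp_le (hg : IsInwardField Ω g δ r B) (hF : Measurable F) {t : ℝ}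
    (ht : t ∈ Icc 0 δ) (z : E) :
    ∫⁻ x in Ω, F (x + t • (g x + z)) ∂μ ≤ 2 ^ finrank ℝ E * ∫⁻ y, F y ∂μ := by
  have hgm := hg.continuous
  refine setLIntegral_comp_le_of_antilipschitzWith (K := 2) μ (by fun_prop)
    (AntilipschitzWith.of_le_mul_dist fun x y => ?_) hF
  rw [Subtype.dist_eq, dist_eq_norm, dist_eq_norm]
  refine (hg.antilipschitz t ht x x.2 y y.2).trans_eq ?_
  simp only [domRestrict_apply, smul_add, ← add_assoc, add_sub_add_right_eq_sub]
  rfl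

variable {u : E → ℝ}

lemma lintegral_enorm_sq_le (hg : IsInwardField Ω g δ r B) (hΩ : MeasurableSet Ω) (hδ : 0 ≤ δ)
    (hu : IsC1On u Ω) {z : E} (hz : z ∈ ball 0 r) :
    ∫⁻ x in Ω, ‖u x‖ₑ ^ 2 ∂μ ≤
      2 * ∫⁻ x in Ω, Ω.indicator (‖u ·‖ₑ) x * Ω.indicator (‖u ·‖ₑ) (x + δ • (g x + z)) ∂μ +
      ENNReal.ofReal (δ * B ^ 2) * (ENNReal.ofReal δ *
        (2 ^ finrank ℝ E * ∫⁻ x in Ω, ‖fderiv ℝ u x‖ₑ ^ 2 ∂μ)) := by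
  have hgm := hg.continuous
  set U : E → ℝ≥0∞ := Ω.indicator (‖u ·‖ₑ)
  set W : E → ℝ≥0∞ := Ω.indicator fun x => ‖fderiv ℝ u x‖ₑ ^ 2
  have hU : Measurable U := measurable_indicator_of_continuousOn hΩ hu.continuousOn.enorm
  have hW : Measurable W := measurable_indicator_of_continuousOn hΩ
    ((ENNReal.continuous_pow 2).comp_continuousOn hu.continuousOn_fderiv.enorm)
  have hpoint : ∀ x ∈ Ω, ‖u x‖ₑ ^ 2 ≤ 2 * (U x * U (x + δ • (g x + z))) +
      ENNReal.ofReal (δ * B ^ 2) * ∫⁻ t in Ioc 0 δ, W (x + t • (g x + z)) := fun x hx => by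
    have hseg := hg.add_smul_mem x hx z hz
    rw [show U x = ‖u x‖ₑ from indicator_of_mem hx _,
      show U (x + δ • (g x + z)) = _ from indicator_of_mem (hseg δ (right_mem_Icc.2 hδ)) _,
      setLIntegral_congr_fun measurableSet_Ioc fun t ht =>
        indicator_of_mem (hseg t (Ioc_subset_Icc_self ht)) _]
    exact hu.enorm_sq_le_lintegral_segment hδ (hg.norm_add_le x hx z hz) hseg
  have hgrad : ∫⁻ x in Ω, (∫⁻ t in Ioc 0 δ, W (x + t • (g x + z))) ∂μ ≤
      ENNReal.ofReal δ * (2 ^ finrank ℝ E * ∫⁻ x in Ω, ‖fderiv ℝ u x‖ₑ ^ 2 ∂μ) := by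
    have hWm : Measurable fun p : E × ℝ => W (p.1 + p.2 • (g p.1 + z)) := hW.comp (by fun_prop)
    rw [lintegral_lintegral_swap hWm.aemeasurable]
    refine (setLIntegral_mono' measurableSet_Ioc fun t ht =>
      hg.setLIntegral_comp_le hW (Ioc_subset_Icc_self ht) z).trans_eq ?_
    rw [setLIntegral_const, Real.volume_Ioc, sub_zero, lintegral_indicator hΩ, mul_comm]
  calc ∫⁻ x in Ω, ‖u x‖ₑ ^ 2 ∂μ
      ≤ ∫⁻ x in Ω, (2 * (U x * U (x + δ • (g x + z))) +
          ENNReal.ofReal (δ * B ^ 2) * ∫⁻ t in Ioc 0 δ, W (x + t • (g x + z))) ∂μ :=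
        setLIntegral_mono' hΩ hpoint
    _ = 2 * ∫⁻ x in Ω, U x * U (x + δ • (g x + z)) ∂μ +
          ENNReal.ofReal (δ * B ^ 2) *
            ∫⁻ x in Ω, (∫⁻ t in Ioc 0 δ, W (x + t • (g x + z))) ∂μ := by
        have hUm : Measurable fun x => U x * U (x + δ • (g x + z)) :=
          hU.mul (hU.comp (by fun_prop))
        rw [lintegral_add_left (hUm.const_mul 2), lintegral_const_mul _ hUm,
          lintegral_const_mul' _ _ ENNReal.ofReal_ne_top]
    _ ≤ _ := by gcongr

lemma measure_ball_mul_lintegral_enorm_sq_le (hg : IsInwardField Ω g δ r B)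
    (hΩ : MeasurableSet Ω) (hδ : 0 < δ) (hu : IsC1On u Ω) :
    μ (ball 0 r) * ∫⁻ x in Ω, ‖u x‖ₑ ^ 2 ∂μ ≤
      2 * (ENNReal.ofReal ((δ ^ finrank ℝ E)⁻¹) * (∫⁻ x in Ω, ‖u x‖ₑ ∂μ) ^ 2) +
      μ (ball 0 r) * (ENNReal.ofReal (δ * B ^ 2) * (ENNReal.ofReal δ *
        (2 ^ finrank ℝ E * ∫⁻ x in Ω, ‖fderiv ℝ u x‖ₑ ^ 2 ∂μ))) := by
  have hgm := hg.continuous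
  set U : E → ℝ≥0∞ := Ω.indicator (‖u ·‖ₑ)
  set G := ENNReal.ofReal (δ * B ^ 2) * (ENNReal.ofReal δ *
    (2 ^ finrank ℝ E * ∫⁻ x in Ω, ‖fderiv ℝ u x‖ₑ ^ 2 ∂μ))
  have hU : Measurable U := measurable_indicator_of_continuousOn hΩ hu.continuousOn.enorm
  have hUm : Measurable fun p : E × E => U p.2 * U (p.2 + δ • (g p.2 + p.1)) :=
    (hU.comp measurable_snd).mul (hU.comp (by fun_prop))
  have hmass : ∫⁻ x in Ω, U x ∂μ = ∫⁻ x in Ω, ‖u x‖ₑ ∂μ :=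
    setLIntegral_congr_fun hΩ fun x hx => indicator_of_mem hx _
  have hshift (x : E) : ∫⁻ z in ball 0 r, U (x + δ • (g x + z)) ∂μ ≤
      ENNReal.ofReal ((δ ^ finrank ℝ E)⁻¹) * ∫⁻ x in Ω, ‖u x‖ₑ ∂μ := by
    rw [← lintegral_indicator hΩ, ← lintegral_comp_add_smul μ hU (x + δ • g x) hδ]
    simp only [smul_add, ← add_assoc]
    exact setLIntegral_le_lintegral _ _
  have hproduct : ∫⁻ z in ball 0 r, ∫⁻ x in Ω, U x * U (x + δ • (g x + z)) ∂μ ∂μ ≤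
      ENNReal.ofReal ((δ ^ finrank ℝ E)⁻¹) * (∫⁻ x in Ω, ‖u x‖ₑ ∂μ) ^ 2 := by
    rw [lintegral_lintegral_swap hUm.aemeasurable]
    calc ∫⁻ x in Ω, ∫⁻ z in ball 0 r, U x * U (x + δ • (g x + z)) ∂μ ∂μ
        = ∫⁻ x in Ω, U x * ∫⁻ z in ball 0 r, U (x + δ • (g x + z)) ∂μ ∂μ :=
          lintegral_congr fun x => lintegral_const_mul _ (hU.comp (by fun_prop))
      _ ≤ ∫⁻ x in Ω, U x * (ENNReal.ofReal ((δ ^ finrank ℝ E)⁻¹) * ∫⁻ x in Ω, ‖u x‖ₑ ∂μ) ∂μ := by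
          gcongr with x; exact hshift x
      _ = _ := by rw [lintegral_mul_const _ hU, hmass]; ring
  calc μ (ball 0 r) * ∫⁻ x in Ω, ‖u x‖ₑ ^ 2 ∂μ
      = ∫⁻ _ in ball 0 r, ∫⁻ x in Ω, ‖u x‖ₑ ^ 2 ∂μ ∂μ := by rw [setLIntegral_const, mul_comm]
    _ ≤ ∫⁻ z in ball 0 r, (2 * ∫⁻ x in Ω, U x * U (x + δ • (g x + z)) ∂μ + G) ∂μ :=
        setLIntegral_mono' measurableSet_ball fun z hz => hg.lintegral_enorm_sq_le hΩ hδ.le hu hz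
    _ = 2 * ∫⁻ z in ball 0 r, ∫⁻ x in Ω, U x * U (x + δ • (g x + z)) ∂μ ∂μ +
          μ (ball 0 r) * G := by
        rw [lintegral_add_right _ measurable_const, lintegral_const_mul' _ _ ENNReal.ofNat_ne_top,
          setLIntegral_const, mul_comm G]
    _ ≤ _ := by gcongr

end IsInwardField

end Nash

section InwardField

open scoped Gradient Topology NNReal
open Metric (ball)
open Filter

lemma add_smul_mem_of_fderiv_pos {E : Type*} [NormedAddCommGroup E] [NormedSpace ℝ E]
    {Ω : Set E} {η : E → ℝ} (hΩ : IsOpen Ω) (hη : Differentiable ℝ η)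
    (hpos : ∀ x ∈ Ω, 0 < η x) (hzero : ∀ x ∈ frontier Ω, η x = 0) {x b : E} (hx : x ∈ Ω) {t : ℝ}
    (ht : 0 ≤ t) (hb : ∀ s ∈ Icc 0 t, x + s • b ∈ Ω ∨ 0 < fderiv ℝ η (x + s • b) b) :
    x + t • b ∈ Ω := by
  by_contra hexit
  have hline : Continuous fun s : ℝ => x + s • b := by fun_prop
  have hcompact : IsCompact (Icc 0 t ∩ (fun s : ℝ => x + s • b) ⁻¹' Ωᶜ) :=
    isCompact_Icc.inter_right (hΩ.isClosed_compl.preimage hline)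
  obtain ⟨s, ⟨hs, hsΩ⟩, hleast⟩ := hcompact.exists_isLeast ⟨t, right_mem_Icc.2 ht, hexit⟩
  have hs0 : 0 < s := hs.1.lt_of_ne fun h => hsΩ (by simpa [← h] using hx)
  have hbefore : ∀ᶠ r in 𝓝[<] s, x + r • b ∈ Ω := by
    filter_upwards [Ioo_mem_nhdsLT hs0] with r hr
    by_contra hrΩ
    exact hr.2.not_ge (hleast ⟨⟨hr.1.le, hr.2.le.trans hs.2⟩, hrΩ⟩)
  have hclosure : x + s • b ∈ closure Ω :=
    mem_closure_of_tendsto (hline.tendsto s |>.mono_left nhdsWithin_le_nhds) hbefore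
  have hη0 : η (x + s • b) = 0 := hzero _ (hΩ.frontier_eq ▸ ⟨hclosure, hsΩ⟩)
  have hderiv : HasDerivAt (fun r : ℝ => η (x + r • b)) (fderiv ℝ η (x + s • b) b) s :=
    (hη _).hasFDerivAt.comp_hasDerivAt s
      (by simpa using ((hasDerivAt_id s).smul_const b).const_add x)
  have hsign := eventually_nhdsWithin_sign_eq_of_deriv_pos
    (hderiv.deriv ▸ (hb s hs).resolve_left hsΩ) hη0
  obtain ⟨r, hrsign, hrΩ, hrs⟩ := ((hsign.filter_mono nhdsWithin_le_nhds).and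
    (hbefore.and self_mem_nhdsWithin)).exists
  rw [sign_pos (hpos _ hrΩ), sign_neg (sub_neg.2 hrs)] at hrsign
  exact absurd hrsign (by decide)

namespace IsBoundedC2Domain

variable {E : Type*} [NormedAddCommGroup E] [InnerProductSpace ℝ E] [FiniteDimensional ℝ E]
  {Ω : Set E} {η : E → ℝ} (h : IsBoundedC2Domain Ω η)

include h

lemma contDiff_gradient : ContDiff ℝ 1 (∇ η) :=
  (InnerProductSpace.toDual ℝ E).symm.contDiff.comp (h.contDiff.fderiv_right (by norm_num))

lemma eventually_forall_add_smul_mem :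
    ∀ᶠ p : E × ℝ in 𝓝 (0, 0), ∀ x ∈ closure Ω,
      x + p.2 • (∇ η x + p.1) ∈ Ω ∨
        0 < fderiv ℝ η (x + p.2 • (∇ η x + p.1)) (∇ η x + p.1) := by
  have hg := h.contDiff_gradient.continuous
  have hη' : Continuous (fderiv ℝ η) := h.contDiff.continuous_fderiv two_ne_zero
  refine h.isBounded.isCompact_closure.eventually_forall_of_forall_eventually fun x hx => ?_
  rw [closure_eq_self_union_frontier] at hx
  rcases hx with hx | hx
  · refine (ContinuousAt.eventually_mem (f := fun p : (E × ℝ) × E =>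
      p.2 + p.1.2 • (∇ η p.2 + p.1.1)) (by fun_prop) ?_).mono fun p hp => .inl hp
    simpa using h.isOpen.mem_nhds hx
  · refine (ContinuousAt.eventually_lt (f := fun _ : (E × ℝ) × E => (0 : ℝ))
      (g := fun p : (E × ℝ) × E => fderiv ℝ η (p.2 + p.1.2 • (∇ η p.2 + p.1.1))
        (∇ η p.2 + p.1.1)) (by fun_prop) (by fun_prop) ?_).mono fun p hp => .inr hp
    simpa [← inner_gradient_left] using sq_pos_of_pos (norm_pos_iff.2 (h.gradient_ne_zero x hx))

lemma exists_isInwardField :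
    ∃ δ > 0, ∃ r > 0, ∃ B, IsInwardField Ω (∇ η) δ r B := by
  have hg := h.contDiff_gradient
  have hK : IsCompact (closure Ω) := h.isBounded.isCompact_closure
  obtain ⟨ε, hε, hmem⟩ := Metric.eventually_nhds_iff.1 h.eventually_forall_add_smul_mem
  obtain ⟨G, hG⟩ := hK.exists_bound_of_continuousOn hg.continuous.continuousOn
  obtain ⟨L, hL⟩ := hg.locallyLipschitz.locallyLipschitzOn.exists_lipschitzOnWith_of_compact hK
  set δ := min (ε / 2) (1 / (2 * (L + 1)))
  have hδε : δ < ε := (min_le_left _ _).trans_lt (half_lt_self hε)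
  have hδL : δ * L ≤ 1 / 2 := calc
    δ * L ≤ 1 / (2 * (L + 1)) * (L + 1) := by
      gcongr
      exacts [min_le_right _ _, le_add_of_nonneg_right zero_le_one]
    _ = 1 / 2 := by field_simp
  refine ⟨δ, by positivity, ε, hε, G + ε, hg.continuous, fun x hx z hz => ?_,
    fun x hx z hz t ht => ?_, fun t ht x hx y hy => ?_⟩
  · exact (norm_add_le _ _).trans
      (add_le_add (hG x (subset_closure hx)) (mem_ball_zero_iff.1 hz).le)
  · refine add_smul_mem_of_fderiv_pos h.isOpen (h.contDiff.differentiable two_ne_zero) h.pos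
      h.eq_zero hx ht.1 fun s hs => hmem (y := (z, s)) ?_ x (subset_closure hx)
    rw [Prod.dist_eq, max_lt_iff, dist_zero_right, dist_zero_right, norm_eq_abs,
      abs_of_nonneg hs.1]
    exact ⟨mem_ball_zero_iff.1 hz, (hs.2.trans ht.2).trans_lt hδε⟩
  · have hlip : ‖∇ η x - ∇ η y‖ ≤ L * ‖x - y‖ := by
      simpa only [dist_eq_norm] using
        hL.dist_le_mul x (subset_closure hx) y (subset_closure hy)
    have hshift : ‖t • (∇ η x - ∇ η y)‖ ≤ ‖x - y‖ / 2 := by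
      rw [norm_smul, norm_eq_abs, abs_of_nonneg ht.1]
      nlinarith [mul_le_mul_of_nonneg_right ht.2 (norm_nonneg (∇ η x - ∇ η y)),
        mul_le_mul_of_nonneg_right hδL (norm_nonneg (x - y)),
        mul_le_mul_of_nonneg_left hlip (ht.1.trans ht.2)]
    have htriangle := norm_sub_le (x + t • ∇ η x - (y + t • ∇ η y)) (t • (∇ η x - ∇ η y))
    rw [show x + t • ∇ η x - (y + t • ∇ η y) - t • (∇ η x - ∇ η y) = x - y by
      rw [smul_sub]; abel] at htriangle
    linarith

end IsBoundedC2Domain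

end InwardField

section NashInequality

open Module (finrank)
open scoped Gradient
open Metric (ball)

namespace IsBoundedC2Domain

variable {E : Type*} [NormedAddCommGroup E] [InnerProductSpace ℝ E] [FiniteDimensional ℝ E]
  [MeasurableSpace E] [BorelSpace E] {Ω : Set E} {η : E → ℝ} (h : IsBoundedC2Domain Ω η)

include h

lemma measureReal_ball_mul_integral_sq_le {g : E → E} {δ r B : ℝ} (hg : IsInwardField Ω g δ r B)
    (hδ : 0 < δ) {u : E → ℝ} (hu : IsC1On u (closure Ω)) :
    volume.real (ball (0 : E) r) * ∫ x in Ω, u x ^ 2 ≤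
      2 * ((δ ^ finrank ℝ E)⁻¹ * (∫ x in Ω, |u x|) ^ 2) +
      volume.real (ball (0 : E) r) *
        (δ * B ^ 2 * (δ * (2 ^ finrank ℝ E * ∫ x in Ω, ‖∇ u x‖ ^ 2))) := by
  have hcont := hu.continuousOn
  have key := hg.measure_ball_mul_lintegral_enorm_sq_le (μ := volume) h.isOpen.measurableSet hδ
    (hu.mono subset_closure)
  rw [← ofReal_integral_norm_sq_eq_lintegral
      (integrableOn_of_continuousOn_closure h.isBounded (hcont.norm.pow 2)),
    ← ofReal_integral_norm_sq_eq_lintegral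
      (integrableOn_of_continuousOn_closure h.isBounded (hu.continuousOn_fderiv.norm.pow 2)),
    ← ofReal_integral_norm_eq_lintegral_enorm
      (integrableOn_of_continuousOn_closure h.isBounded hcont),
    ← ofReal_measureReal measure_ball_lt_top.ne, ← ENNReal.ofReal_ofNat 2] at key
  simp only [norm_eq_abs, sq_abs] at key
  have hA : 0 ≤ ∫ x in Ω, u x ^ 2 := integral_nonneg fun x => sq_nonneg _
  have hD : 0 ≤ ∫ x in Ω, ‖fderiv ℝ u x‖ ^ 2 := integral_nonneg fun x => sq_nonneg _
  have hm : 0 ≤ ∫ x in Ω, |u x| := integral_nonneg fun x => abs_nonneg _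
  have hnorm (x : E) : ‖∇ u x‖ = ‖fderiv ℝ u x‖ := LinearIsometryEquiv.norm_map _ _
  simp only [hnorm]
  rw [← ENNReal.ofReal_le_ofReal_iff (by positivity)]
  convert key using 1
  · rw [ENNReal.ofReal_mul (by positivity)]
  · rw [ENNReal.ofReal_add (by positivity) (by positivity)]
    simp (disch := positivity) only [ENNReal.ofReal_mul, ENNReal.ofReal_pow]

lemma exists_nash_inequality :
    ∃ δ₀ > 0, ∃ C > 0, ∀ δ, 0 < δ → δ ≤ δ₀ → ∀ u : E → ℝ, IsC1On u (closure Ω) →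
      ∫ x in Ω, u x ^ 2 ≤
        C * (δ ^ 2 * (∫ x in Ω, ‖∇ u x‖ ^ 2) +
          (δ ^ finrank ℝ E)⁻¹ * (∫ x in Ω, |u x|) ^ 2) := by
  obtain ⟨δ₀, hδ₀, r, hr, B, hg⟩ := h.exists_isInwardField
  obtain ⟨V, hVdef⟩ : ∃ V, volume.real (ball (0 : E) r) = V := ⟨_, rfl⟩
  have hV : 0 < V :=
    hVdef ▸ ENNReal.toReal_pos (Metric.measure_ball_pos _ _ hr).ne' measure_ball_lt_top.ne
  refine ⟨δ₀, hδ₀, B ^ 2 * 2 ^ finrank ℝ E + 2 / V, by positivity, fun δ hδ hδle u hu => ?_⟩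
  have key := h.measureReal_ball_mul_integral_sq_le (hg.mono hδle) hδ hu
  rw [hVdef] at key
  have hD : 0 ≤ δ ^ 2 * ∫ x in Ω, ‖∇ u x‖ ^ 2 :=
    mul_nonneg (sq_nonneg _) (integral_nonneg fun x => sq_nonneg _)
  have hm : 0 ≤ (δ ^ finrank ℝ E)⁻¹ * (∫ x in Ω, |u x|) ^ 2 := by positivity
  refine le_of_mul_le_mul_left (key.trans ?_) hV
  have hcross : 0 ≤ V * (B ^ 2 * 2 ^ finrank ℝ E) * ((δ ^ finrank ℝ E)⁻¹ * (∫ x in Ω, |u x|) ^ 2) +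
      2 * (δ ^ 2 * ∫ x in Ω, ‖∇ u x‖ ^ 2) := by positivity
  have hexpand (S : ℝ) : V * ((B ^ 2 * 2 ^ finrank ℝ E + 2 / V) * S) =
      V * (B ^ 2 * 2 ^ finrank ℝ E) * S + 2 * S := by field_simp
  rw [hexpand]
  linarith

end IsBoundedC2Domain

end NashInequality

section Gronwall

-- The integrating factor `exp (κ t)` absorbs the linear term.
lemma exp_mul_sub_exp_mul_le_integral {F F' g : ℝ → ℝ} {a b κ : ℝ} (hab : a ≤ b)
    (hF : ContinuousOn F (Icc a b)) (hF' : ∀ t ∈ Ioo a b, HasDerivAt F (F' t) t)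
    (hg : ContinuousOn g (Icc a b)) (hle : ∀ t ∈ Ioo a b, F' t ≤ -κ * F t + g t) :
    exp (κ * b) * F b - exp (κ * a) * F a ≤ ∫ t in a..b, exp (κ * t) * g t := by
  have hexp : Continuous fun t : ℝ => exp (κ * t) := by fun_prop
  refine intervalIntegral.sub_le_integral_of_hasDeriv_right_of_le hab
    (g := fun t => exp (κ * t) * F t)
    (g' := fun t => exp (κ * t) * κ * F t + exp (κ * t) * F' t)
    (hexp.continuousOn.mul hF) (fun t ht => ?_) (hexp.continuousOn.mul hg).integrableOn_Icc
    fun t ht => ?_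
  · have hderiv : HasDerivAt (fun t : ℝ => exp (κ * t)) (exp (κ * t) * κ) t := by
      simpa using ((hasDerivAt_id t).const_mul κ).exp
    exact (hderiv.mul (hF' t ht)).hasDerivWithinAt
  · linear_combination exp (κ * t) * hle t ht

lemma exp_mul_sub_exp_mul_le {F F' : ℝ → ℝ} {a b κ c : ℝ} (hab : a ≤ b)
    (hF : ContinuousOn F (Icc a b)) (hF' : ∀ t ∈ Ioo a b, HasDerivAt F (F' t) t)
    (hle : ∀ t ∈ Ioo a b, F' t ≤ -κ * F t + c * exp (κ * (b - t))) :
    exp (κ * b) * F b - exp (κ * a) * F a ≤ (b - a) * (c * exp (κ * b)) := by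
  refine (exp_mul_sub_exp_mul_le_integral hab hF hF' (by fun_prop) hle).trans_eq ?_
  have hconst (t : ℝ) : exp (κ * t) * (c * exp (κ * (b - t))) = c * exp (κ * b) := by
    rw [mul_left_comm, ← exp_add]; ring_nf
  simp only [hconst, intervalIntegral.integral_const, smul_eq_mul]

end Gronwall

section ParametricIntegral

open Filter

variable {X : Type*} [TopologicalSpace X] [MeasurableSpace X] [OpensMeasurableSpace X]
  {μ : Measure X} [IsFiniteMeasureOnCompacts μ] {S K : Set X}

lemma continuousOn_setIntegral_prodMk {Y : Type*} [TopologicalSpace Y] [FirstCountableTopology Y]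
    (hS : MeasurableSet S) (hK : IsCompact K) (hSK : S ⊆ K) {I : Set Y} (hI : IsCompact I)
    {f : Y × X → ℝ} (hf : ContinuousOn f (I ×ˢ K)) :
    ContinuousOn (fun t => ∫ x in S, f (t, x) ∂μ) I := by
  obtain ⟨C, hC⟩ := (hI.prod hK).exists_bound_of_continuousOn hf
  refine continuousOn_of_dominated (bound := fun _ => C) (fun t ht => ?_) (fun t ht => ?_)
    (integrableOn_const ((measure_mono hSK).trans_lt hK.measure_lt_top).ne) ?_
  · exact ContinuousOn.aestronglyMeasurable
      (hf.comp (by fun_prop) fun x hx => ⟨ht, hSK hx⟩) hS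
  · exact ae_restrict_of_forall_mem hS fun x hx => hC (t, x) ⟨ht, hSK hx⟩
  · exact ae_restrict_of_forall_mem hS fun x hx =>
      hf.comp (by fun_prop) fun t ht => ⟨ht, hSK hx⟩

lemma hasDerivAt_setIntegral_prodMk (hS : MeasurableSet S) (hK : IsCompact K) (hSK : S ⊆ K)
    {I : Set ℝ} (hI : IsOpen I) {f f' : ℝ × X → ℝ}
    (hf : ContinuousOn f (I ×ˢ K)) (hf' : ContinuousOn f' (I ×ˢ K))
    (hderiv : ∀ t ∈ I, ∀ x ∈ K, HasDerivAt (fun τ => f (τ, x)) (f' (t, x)) t) {t : ℝ}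
    (ht : t ∈ I) :
    HasDerivAt (fun t => ∫ x in S, f (t, x) ∂μ) (∫ x in S, f' (t, x) ∂μ) t := by
  obtain ⟨ε, hε, hball⟩ := Metric.nhds_basis_closedBall.mem_iff.1 (hI.mem_nhds ht)
  obtain ⟨C, hC⟩ := ((isCompact_closedBall t ε).prod hK).exists_bound_of_continuousOn
    (hf'.mono (prod_mono hball subset_rfl))
  have hfinite : μ S ≠ ⊤ := ((measure_mono hSK).trans_lt hK.measure_lt_top).ne
  have hmeas {g : ℝ × X → ℝ} (hg : ContinuousOn g (I ×ˢ K)) {s : ℝ} (hs : s ∈ I) :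
      AEStronglyMeasurable (fun x => g (s, x)) (μ.restrict S) :=
    ContinuousOn.aestronglyMeasurable (hg.comp (by fun_prop) fun x hx => ⟨hs, hSK hx⟩) hS
  obtain ⟨M, hM⟩ := hK.exists_bound_of_continuousOn (f := fun x => f (t, x))
    (hf.comp (by fun_prop) fun x hx => ⟨ht, hx⟩)
  refine (hasDerivAt_integral_of_dominated_loc_of_deriv_le (Metric.ball_mem_nhds t hε)
    (F := fun s x => f (s, x)) (F' := fun s x => f' (s, x)) (bound := fun _ => C)
    (eventually_of_mem (hI.mem_nhds ht) fun s => hmeas hf) ?_ (hmeas hf' ht) ?_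
    (integrableOn_const hfinite) ?_).2
  · exact (integrableOn_const hfinite).mono' (hmeas hf ht)
      (ae_restrict_of_forall_mem hS fun x hx => hM x (hSK hx))
  · exact ae_restrict_of_forall_mem hS fun x hx s hs =>
      hC (s, x) ⟨Metric.ball_subset_closedBall hs, hSK hx⟩
  · exact ae_restrict_of_forall_mem hS fun x hx s hs =>
      hderiv s (hball (Metric.ball_subset_closedBall hs)) x (hSK hx)

end ParametricIntegral

section BackwardHeat

open scoped Gradient Laplacian

variable {E : Type*} [NormedAddCommGroup E] [InnerProductSpace ℝ E] [FiniteDimensional ℝ E]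

/-- A nonnegative function `q` on `[a, b] × closure Ω`, with time derivative `q'`, which solves a
backward heat equation `-∂ₜq - Δq + V q = 0` with the Neumann condition on `∂Ω`. The potential only
enters through `|V| ≤ A`, so it is eliminated in favour of `|∂ₜq + Δq| ≤ A q`. -/
structure IsNeumannBackwardHeat (Ω : Set E) (η : E → ℝ) (A a b : ℝ) (q q' : ℝ × E → ℝ) :
    Prop where
  continuousOn : ContinuousOn q (Icc a b ×ˢ closure Ω)
  nonneg : ∀ t ∈ Icc a b, ∀ x ∈ closure Ω, 0 ≤ q (t, x)
  hasDerivAt : ∀ t ∈ Ioo a b, ∀ x ∈ closure Ω, HasDerivAt (fun τ => q (τ, x)) (q' (t, x)) t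
  continuousOn_deriv : ContinuousOn q' (Ioo a b ×ˢ closure Ω)
  isC2On : ∀ t ∈ Ioo a b, IsC2On (fun x => q (t, x)) (closure Ω)
  abs_add_laplacian_le : ∀ t ∈ Ioo a b, ∀ x ∈ Ω,
    |q' (t, x) + Δ (fun y => q (t, y)) x| ≤ A * q (t, x)
  neumann : ∀ t ∈ Ioo a b, ∀ x ∈ frontier Ω, ⟪∇ (fun y => q (t, y)) x, ∇ η x⟫ = 0

namespace IsNeumannBackwardHeat

variable {Ω : Set E} {η : E → ℝ} {A a b : ℝ} {q q' : ℝ × E → ℝ}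
  (hq : IsNeumannBackwardHeat Ω η A a b q q')

include hq

lemma mono {c d : ℝ} (hac : a ≤ c) (hdb : d ≤ b) : IsNeumannBackwardHeat Ω η A c d q q' :=
  have hIcc : Icc c d ⊆ Icc a b := Icc_subset_Icc hac hdb
  have hIoo : Ioo c d ⊆ Ioo a b := Ioo_subset_Ioo hac hdb
  { continuousOn := hq.continuousOn.mono (prod_mono_left hIcc)
    nonneg := fun t ht => hq.nonneg t (hIcc ht)
    hasDerivAt := fun t ht => hq.hasDerivAt t (hIoo ht)
    continuousOn_deriv := hq.continuousOn_deriv.mono (prod_mono_left hIoo)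
    isC2On := fun t ht => hq.isC2On t (hIoo ht)
    abs_add_laplacian_le := fun t ht => hq.abs_add_laplacian_le t (hIoo ht)
    neumann := fun t ht => hq.neumann t (hIoo ht) }

lemma continuousOn_Ioo : ContinuousOn q (Ioo a b ×ˢ closure Ω) :=
  hq.continuousOn.mono (prod_mono_left Ioo_subset_Icc_self)

lemma continuousOn_slice {t : ℝ} (ht : t ∈ Icc a b) :
    ContinuousOn (fun x => q (t, x)) (closure Ω) :=
  hq.continuousOn.comp (by fun_prop) fun _ hx => ⟨ht, hx⟩

lemma continuousOn_deriv_slice {t : ℝ} (ht : t ∈ Ioo a b) :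
    ContinuousOn (fun x => q' (t, x)) (closure Ω) :=
  hq.continuousOn_deriv.comp (by fun_prop) fun _ hx => ⟨ht, hx⟩

lemma continuousOn_laplacian_slice {t : ℝ} (ht : t ∈ Ioo a b) :
    ContinuousOn (Δ fun x => q (t, x)) (closure Ω) :=
  (hq.isC2On t ht).continuousOn_laplacian

variable [MeasurableSpace E] [BorelSpace E]

lemma setIntegral_nonneg {S : Set E} (hS : MeasurableSet S) (hSΩ : S ⊆ Ω) {t : ℝ}
    (ht : t ∈ Icc a b) : 0 ≤ ∫ x in S, q (t, x) :=
  MeasureTheory.setIntegral_nonneg hS fun x hx => hq.nonneg t ht x (subset_closure (hSΩ hx))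

lemma integral_le_exp_mul_integral (h : IsBoundedC2Domain Ω η) {t : ℝ} (ht : t ∈ Icc a b) :
    ∫ x in Ω, q (t, x) ≤ exp (A * (b - t)) * ∫ x in Ω, q (b, x) := by
  have hΩ := h.isOpen.measurableSet
  have hK := h.isBounded.isCompact_closure
  have hIoo {s : ℝ} (hs : s ∈ Ioo t b) : s ∈ Ioo a b := ⟨ht.1.trans_lt hs.1, hs.2⟩
  have key := exp_mul_sub_exp_mul_le_integral (F := fun s => -∫ x in Ω, q (s, x))
    (F' := fun s => -∫ x in Ω, q' (s, x)) (g := fun _ => 0) (κ := A) ht.2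
    ((continuousOn_setIntegral_prodMk hΩ hK subset_closure isCompact_Icc hq.continuousOn).mono
      (Icc_subset_Icc_left ht.1)).neg
    (fun s hs => (hasDerivAt_setIntegral_prodMk hΩ hK subset_closure isOpen_Ioo
      hq.continuousOn_Ioo hq.continuousOn_deriv hq.hasDerivAt (hIoo hs)).neg)
    continuousOn_const fun s hs => ?_
  · simp only [mul_zero, intervalIntegral.integral_zero] at key
    refine le_of_mul_le_mul_left ?_ (exp_pos (A * t))
    rw [← mul_assoc, ← exp_add, mul_sub, add_sub_cancel]
    linarith
  have hs := hIoo hs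
  have hmass : IntegrableOn (fun x => q (s, x)) Ω :=
    integrableOn_of_continuousOn_closure h.isBounded
      (hq.continuousOn_slice (Ioo_subset_Icc_self hs))
  have hlap : IntegrableOn (Δ fun x => q (s, x)) Ω :=
    integrableOn_of_continuousOn_closure h.isBounded (hq.continuousOn_laplacian_slice hs)
  have hderiv : ∫ x in Ω, (-A * q (s, x) - Δ (fun y => q (s, y)) x) ≤ ∫ x in Ω, q' (s, x) :=
    setIntegral_mono_on ((hmass.const_mul (-A)).sub hlap)
      (integrableOn_of_continuousOn_closure h.isBounded (hq.continuousOn_deriv_slice hs)) hΩ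
      fun x hx => by linarith [(abs_le.1 (hq.abs_add_laplacian_le s hs x hx)).1]
  rw [integral_sub (hmass.const_mul (-A)) hlap, integral_const_mul,
    h.integral_laplacian_eq_zero (hq.isC2On s hs) (hq.neumann s hs)] at hderiv
  linarith

end IsNeumannBackwardHeat

end BackwardHeat

section CarlemanEstimate

open scoped Gradient Laplacian

variable {E : Type*} [NormedAddCommGroup E] [InnerProductSpace ℝ E] [FiniteDimensional ℝ E]
  {Ω ω : Set E} {η : E → ℝ} {c D M : ℝ}

/-- Quantitative form of the properties of `η` which make `exp (s * η)` a Carleman weight for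
observation on `ω`. -/
structure IsCarlemanWeight (Ω ω : Set E) (η : E → ℝ) (c D M : ℝ) : Prop where
  le_norm_gradient_sq : ∀ x ∈ Ω \ ω, c ≤ ‖∇ η x‖ ^ 2
  abs_laplacian_le : ∀ x ∈ Ω, |Δ η x| ≤ D
  le : ∀ x ∈ Ω, η x ≤ M

lemma IsBoundedC2Domain.exists_isCarlemanWeight (h : IsBoundedC2Domain Ω η)
    (hgrad : ∀ x ∈ closure (Ω \ ω), ∇ η x ≠ 0) :
    ∃ c > 0, ∃ D M, IsCarlemanWeight Ω ω η c D M := by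
  have hK := h.isBounded.isCompact_closure
  obtain ⟨D, hD⟩ := hK.exists_bound_of_continuousOn
    (isC2On_of_contDiff h.contDiff (closure Ω)).continuousOn_laplacian
  obtain ⟨M, hM⟩ := hK.exists_bound_of_continuousOn h.contDiff.continuous.continuousOn
  obtain ⟨c, hc, hc_le⟩ : ∃ c > 0, ∀ x ∈ Ω \ ω, c ≤ ‖∇ η x‖ ^ 2 := by
    rcases (closure (Ω \ ω)).eq_empty_or_nonempty with hempty | hne
    · exact ⟨1, one_pos, fun x hx => absurd (subset_closure hx) (hempty ▸ notMem_empty x)⟩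
    obtain ⟨x₀, hx₀, hmin⟩ :=
      (h.isBounded.subset sdiff_subset).isCompact_closure.exists_isMinOn hne
        (h.contDiff_gradient.continuous.norm.pow 2).continuousOn
    exact ⟨‖∇ η x₀‖ ^ 2, pow_pos (norm_pos_iff.2 (hgrad x₀ hx₀)) 2,
      fun x hx => hmin (subset_closure hx)⟩
  exact ⟨c, hc, D, M, hc_le, fun x hx => hD x (subset_closure hx),
    fun x hx => (le_abs_self _).trans (hM x (subset_closure hx))⟩

-- Outside `ω` the quadratic term `s² ‖∇η‖²` dominates; inside `ω` it is discarded and the error is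
-- charged to the observation.
lemma IsCarlemanWeight.mul_exp_mul_le (hw : IsCarlemanWeight Ω ω η c D M) {A s κ : ℝ} (hs : 0 ≤ s)
    (hκ : 0 ≤ κ) (hκ_lower : A + s * D ≤ κ) (hκ_upper : 2 * κ ≤ c * s ^ 2) {f : E → ℝ} {x : E}
    (hx : x ∈ Ω) (hf : 0 ≤ f x) :
    f x * exp (s * η x) * (A - (s * Δ η x + s ^ 2 * ‖∇ η x‖ ^ 2)) ≤
      -κ * (f x * exp (s * η x)) + 2 * κ * exp (s * M) * ω.indicator f x := by
  have hlower : -(s * D) ≤ s * Δ η x := by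
    linear_combination s * (abs_le.1 (hw.abs_laplacian_le x hx)).1
  by_cases hxω : x ∈ ω
  · rw [indicator_of_mem hxω]
    have hexp : exp (s * η x) ≤ exp (s * M) := by gcongr; exact hw.le x hx
    have hfactor : A - (s * Δ η x + s ^ 2 * ‖∇ η x‖ ^ 2) ≤ κ := by
      linarith [show 0 ≤ s ^ 2 * ‖∇ η x‖ ^ 2 by positivity]
    have hcharge : 0 ≤ 2 * κ * f x := by positivity
    linear_combination f x * exp (s * η x) * hfactor + 2 * κ * f x * hexp
  · rw [indicator_of_notMem hxω]
    have hfactor : A - (s * Δ η x + s ^ 2 * ‖∇ η x‖ ^ 2) ≤ -κ := by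
      linear_combination
        s ^ 2 * hw.le_norm_gradient_sq x ⟨hx, hxω⟩ + hlower + hκ_lower + hκ_upper
    linear_combination f x * exp (s * η x) * hfactor

variable [MeasurableSpace E] [BorelSpace E] {A a b : ℝ} {q q' : ℝ × E → ℝ}

namespace IsNeumannBackwardHeat

variable (hq : IsNeumannBackwardHeat Ω η A a b q q') (h : IsBoundedC2Domain Ω η)

include hq h

lemma integral_deriv_mul_exp_le {s : ℝ} (hs : 0 ≤ s) {t : ℝ} (ht : t ∈ Ioo a b) :
    ∫ x in Ω, q' (t, x) * exp (s * η x) ≤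
      ∫ x in Ω, q (t, x) * exp (s * η x) * (A - (s * Δ η x + s ^ 2 * ‖∇ η x‖ ^ 2)) := by
  have hint {f : E → ℝ} (hf : ContinuousOn f (closure Ω)) : IntegrableOn f Ω :=
    integrableOn_of_continuousOn_closure h.isBounded hf
  have hη := h.contDiff.continuous
  have hexp : ContinuousOn (fun x => exp (s * η x)) (closure Ω) := by fun_prop
  have hq_cont := hq.continuousOn_slice (Ioo_subset_Icc_self ht)
  have hgrad := h.contDiff_gradient.continuous.continuousOn (s := closure Ω)
  have hlapη := (isC2On_of_contDiff h.contDiff (closure Ω)).continuousOn_laplacian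
  have hmass : IntegrableOn (fun x => A * (q (t, x) * exp (s * η x))) Ω :=
    hint (continuousOn_const.mul (hq_cont.mul hexp))
  have hlap : IntegrableOn (fun x => exp (s * η x) * Δ (fun y => q (t, y)) x) Ω :=
    hint (hexp.mul (hq.continuousOn_laplacian_slice ht))
  have hweight : IntegrableOn
      (fun x => q (t, x) * (exp (s * η x) * (s * Δ η x + s ^ 2 * ‖∇ η x‖ ^ 2))) Ω :=
    hint (hq_cont.mul (hexp.mul
      ((continuousOn_const.mul hlapη).add (continuousOn_const.mul (hgrad.norm.pow 2)))))
  calc ∫ x in Ω, q' (t, x) * exp (s * η x)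
      ≤ ∫ x in Ω, (A * (q (t, x) * exp (s * η x)) - exp (s * η x) * Δ (fun y => q (t, y)) x) :=
        setIntegral_mono_on (hint ((hq.continuousOn_deriv_slice ht).mul hexp)) (hmass.sub hlap)
          h.isOpen.measurableSet fun x hx => by
            linear_combination exp (s * η x) * (abs_le.1 (hq.abs_add_laplacian_le t ht x hx)).2
    _ ≤ (∫ x in Ω, A * (q (t, x) * exp (s * η x))) -
          ∫ x in Ω, q (t, x) * (exp (s * η x) * (s * Δ η x + s ^ 2 * ‖∇ η x‖ ^ 2)) := by
        rw [integral_sub hmass hlap]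
        exact sub_le_sub_left (h.integral_exp_weight_le (hq.isC2On t ht)
          (fun x hx => hq.nonneg t (Ioo_subset_Icc_self ht) x (frontier_subset_closure hx))
          (hq.neumann t ht) hs) _
    _ = ∫ x in Ω, q (t, x) * exp (s * η x) * (A - (s * Δ η x + s ^ 2 * ‖∇ η x‖ ^ 2)) := by
        rw [← integral_sub hmass hweight]
        congr with x
        ring

lemma integral_deriv_mul_exp_le_add (hω : MeasurableSet ω) (hωΩ : ω ⊆ Ω)
    (hw : IsCarlemanWeight Ω ω η c D M) {s κ : ℝ} (hs : 0 ≤ s) (hκ : 0 ≤ κ)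
    (hκ_lower : A + s * D ≤ κ) (hκ_upper : 2 * κ ≤ c * s ^ 2) {t : ℝ} (ht : t ∈ Ioo a b) :
    ∫ x in Ω, q' (t, x) * exp (s * η x) ≤
      -κ * (∫ x in Ω, q (t, x) * exp (s * η x)) + 2 * κ * exp (s * M) * ∫ x in ω, q (t, x) := by
  have hint {f : E → ℝ} (hf : ContinuousOn f (closure Ω)) : IntegrableOn f Ω :=
    integrableOn_of_continuousOn_closure h.isBounded hf
  have hη := h.contDiff.continuous
  have hq_cont := hq.continuousOn_slice (Ioo_subset_Icc_self ht)
  have hlapη := (isC2On_of_contDiff h.contDiff (closure Ω)).continuousOn_laplacian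
  have hgrad := h.contDiff_gradient.continuous.continuousOn (s := closure Ω)
  have hexp : ContinuousOn (fun x => q (t, x) * exp (s * η x)) (closure Ω) :=
    hq_cont.mul (by fun_prop)
  have hobs : IntegrableOn (ω.indicator fun x => q (t, x)) Ω := (hint hq_cont).indicator hω
  calc ∫ x in Ω, q' (t, x) * exp (s * η x)
      ≤ ∫ x in Ω, q (t, x) * exp (s * η x) * (A - (s * Δ η x + s ^ 2 * ‖∇ η x‖ ^ 2)) :=
        hq.integral_deriv_mul_exp_le h hs ht
    _ ≤ ∫ x in Ω, (-κ * (q (t, x) * exp (s * η x)) +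
          2 * κ * exp (s * M) * ω.indicator (fun x => q (t, x)) x) :=
        setIntegral_mono_on
          (hint (hexp.mul (continuousOn_const.sub
            ((continuousOn_const.mul hlapη).add (continuousOn_const.mul (hgrad.norm.pow 2))))))
          (((hint hexp).const_mul (-κ)).add (hobs.const_mul _)) h.isOpen.measurableSet
          fun x hx => hw.mul_exp_mul_le (f := fun x => q (t, x)) hs hκ hκ_lower hκ_upper hx
            (hq.nonneg t (Ioo_subset_Icc_self ht) x (subset_closure hx))
    _ = -κ * (∫ x in Ω, q (t, x) * exp (s * η x)) +
          2 * κ * exp (s * M) * ∫ x in ω, q (t, x) := by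
        rw [integral_add ((hint hexp).const_mul (-κ)) (hobs.const_mul _), integral_const_mul,
          integral_const_mul, setIntegral_indicator hω, inter_eq_self_of_subset_right hωΩ]

lemma exp_mul_integral_weight_sub_le (hω : MeasurableSet ω) (hωΩ : ω ⊆ Ω)
    (hw : IsCarlemanWeight Ω ω η c D M) {s κ : ℝ} (hs : 0 ≤ s) (hκ : 0 ≤ κ)
    (hκ_lower : A + s * D ≤ κ) (hκ_upper : 2 * κ ≤ c * s ^ 2) (hab : a ≤ b) :
    exp (κ * b) * (∫ x in Ω, q (b, x) * exp (s * η x)) -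
        exp (κ * a) * (∫ x in Ω, q (a, x) * exp (s * η x)) ≤
      exp (κ * b) * (2 * κ * exp (s * M)) * ∫ t in a..b, ∫ x in ω, q (t, x) := by
  have hΩ := h.isOpen.measurableSet
  have hK := h.isBounded.isCompact_closure
  have hη := h.contDiff.continuous
  have hexp : Continuous fun p : ℝ × E => exp (s * η p.2) := by fun_prop
  have hobs : ContinuousOn (fun t => ∫ x in ω, q (t, x)) (Icc a b) :=
    continuousOn_setIntegral_prodMk hω hK (hωΩ.trans subset_closure) isCompact_Icc hq.continuousOn
  refine (exp_mul_sub_exp_mul_le_integral hab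
    (continuousOn_setIntegral_prodMk hΩ hK subset_closure isCompact_Icc
      (f := fun p => q p * exp (s * η p.2)) (hq.continuousOn.mul hexp.continuousOn))
    (fun t ht => hasDerivAt_setIntegral_prodMk hΩ hK subset_closure isOpen_Ioo
      (hq.continuousOn_Ioo.mul hexp.continuousOn) (hq.continuousOn_deriv.mul hexp.continuousOn)
      (fun t ht x hx => (hq.hasDerivAt t ht x hx).mul_const (exp (s * η x))) ht)
    (g := fun t => 2 * κ * exp (s * M) * ∫ x in ω, q (t, x)) (continuousOn_const.mul hobs)
    fun t ht => hq.integral_deriv_mul_exp_le_add h hω hωΩ hw hs hκ hκ_lower hκ_upper ht).trans ?_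
  rw [← intervalIntegral.integral_const_mul]
  refine intervalIntegral.integral_mono_on hab
    (((by fun_prop : ContinuousOn (fun t => exp (κ * t)) _).mul
      (continuousOn_const.mul hobs)).intervalIntegrable_of_Icc hab)
    ((continuousOn_const.mul hobs).intervalIntegrable_of_Icc hab) fun t ht => ?_
  have hobs_nonneg := hq.setIntegral_nonneg hω hωΩ ht
  rw [← mul_assoc]
  gcongr
  exact ht.2

end IsNeumannBackwardHeat

end CarlemanEstimate

section ObservabilityL1

open scoped Gradient

/-- The exponent governing the observability cost over time `T` for potentials bounded by `A`. -/
noncomputable def observabilityExponent (T A : ℝ) : ℝ := 1 + 1 / T + T * A + √A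

lemma inv_add_sqrt_sq_mul_le {T A : ℝ} (hT : 0 < T) (hA : 0 ≤ A) :
    (1 / T + √A) ^ 2 * T ≤ 2 * observabilityExponent T A := by
  have hsq : √A ^ 2 = A := sq_sqrt hA
  have hcross : (1 / T + √A) ^ 2 * T ≤ 2 * (1 / T + T * A) := by
    calc (1 / T + √A) ^ 2 * T ≤ 2 * ((1 / T) ^ 2 + √A ^ 2) * T := by gcongr; exact add_sq_le
      _ = 2 * (1 / T + T * A) := by rw [hsq]; field_simp
  rw [observabilityExponent]
  linarith [sqrt_nonneg A]

lemma mul_sq_mul_exp_le {y : ℝ} (hy : 0 ≤ y) (c w : ℝ) :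
    c * y ^ 2 * exp w ≤ exp (c + 2 * y + w) := by
  have hle_exp (x : ℝ) : x ≤ exp x := by linarith [add_one_le_exp x]
  rw [exp_add, exp_add, two_mul, exp_add, ← sq]
  gcongr <;> exact hle_exp _

lemma exists_one_le_and_forall_le_mul {c : ℝ} (hc : 0 < c) (S : Finset ℝ) :
    ∃ σ : ℝ, 1 ≤ σ ∧ ∀ y ∈ S, y ≤ c * σ := by
  obtain ⟨B, hB⟩ := S.bddAbove
  exact ⟨max 1 (B / c), le_max_left _ _, fun y hy =>
    (hB hy).trans ((div_le_iff₀' hc).1 (le_max_right _ _))⟩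

-- `s = σ (1 / T + √A)` and `κ = c s² / 2` for a large constant `σ`.
lemma exists_carleman_parameters {c : ℝ} (hc : 0 < c) (D M : ℝ) :
    ∃ K > 0, ∀ T A : ℝ, 0 < T → T ≤ 1 → 0 ≤ A → ∃ s κ : ℝ, 0 ≤ s ∧ 0 ≤ κ ∧ A + s * D ≤ κ ∧
      2 * κ ≤ c * s ^ 2 ∧ A * T + s * M + 1 ≤ κ * T ∧
      2 * κ * exp (κ * T) ≤ exp (K * observabilityExponent T A) := by
  obtain ⟨σ, hσ, hσ_max⟩ := exists_one_le_and_forall_le_mul hc {6, 6 * M, 4 * D}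
  obtain ⟨hσc, hσM, hσD⟩ : 6 ≤ c * σ ∧ 6 * M ≤ c * σ ∧ 4 * D ≤ c * σ := by simpa using hσ_max
  refine ⟨c + 2 * σ + c * σ ^ 2, by positivity, fun T A hT hT1 hA => ?_⟩
  have hXsq := inv_add_sqrt_sq_mul_le hT hA
  have hXle : 1 / T + √A ≤ observabilityExponent T A := by
    rw [observabilityExponent]; linarith [mul_nonneg hT.le hA]
  have hAX : A ≤ (1 / T + √A) ^ 2 := by
    rw [← sqrt_le_left (by positivity)]; linarith [one_div_pos.2 hT]
  have hXT : 1 ≤ (1 / T + √A) * T := by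
    rw [add_mul, one_div_mul_cancel hT.ne']; linarith [mul_nonneg (sqrt_nonneg A) hT.le]
  have hX : 1 ≤ 1 / T + √A := by linarith [(one_le_div hT).2 hT1, sqrt_nonneg A]
  have hZ : 1 ≤ observabilityExponent T A := hX.trans hXle
  generalize 1 / T + √A = X at *
  generalize observabilityExponent T A = Z at *
  have hσsq : 6 ≤ c * σ ^ 2 := by nlinarith
  have hsX : 0 ≤ σ * X := by positivity
  have hDs : 4 * D ≤ c * (σ * X) := by nlinarith
  have hAs : 6 * A ≤ c * (σ * X) ^ 2 := by
    calc 6 * A ≤ c * σ ^ 2 * X ^ 2 := by gcongr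
      _ = c * (σ * X) ^ 2 := by ring
  have hMs : 6 * M ≤ c * (σ * X) * T := by nlinarith
  have hone : 6 ≤ c * (σ * X) ^ 2 * T := by
    calc (6 : ℝ) ≤ c * σ ^ 2 * (X * (X * T)) := by nlinarith [one_le_mul_of_one_le_of_one_le hX hXT]
      _ = c * (σ * X) ^ 2 * T := by ring
  refine ⟨σ * X, c * (σ * X) ^ 2 / 2, hsX, by positivity, ?_, by linarith, ?_, ?_⟩
  · nlinarith
  · nlinarith
  · calc 2 * (c * (σ * X) ^ 2 / 2) * exp (c * (σ * X) ^ 2 / 2 * T)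
        = c * (σ * X) ^ 2 * exp (c * σ ^ 2 / 2 * (X ^ 2 * T)) := by ring_nf
      _ ≤ exp (c + 2 * (σ * X) + c * σ ^ 2 / 2 * (X ^ 2 * T)) := mul_sq_mul_exp_le hsX _ _
      _ ≤ exp (c * Z + 2 * (σ * Z) + c * σ ^ 2 / 2 * (2 * Z)) := by
        gcongr
        exact le_mul_of_one_le_right hc.le hZ
      _ = exp ((c + 2 * σ + c * σ ^ 2) * Z) := by ring_nf

variable {E : Type*} [NormedAddCommGroup E] [InnerProductSpace ℝ E] [FiniteDimensional ℝ E]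
  [MeasurableSpace E] [BorelSpace E] {Ω ω : Set E} {η : E → ℝ}

namespace IsNeumannBackwardHeat

variable {A a b : ℝ} {q q' : ℝ × E → ℝ} (hq : IsNeumannBackwardHeat Ω η A a b q q')
  (h : IsBoundedC2Domain Ω η)

include hq h

lemma integrableOn_mul_exp (s : ℝ) {t : ℝ} (ht : t ∈ Icc a b) :
    IntegrableOn (fun x => q (t, x) * exp (s * η x)) Ω :=
  have hη := h.contDiff.continuous
  integrableOn_of_continuousOn_closure h.isBounded ((hq.continuousOn_slice ht).mul (by fun_prop))

lemma integral_le_integral_mul_exp {s : ℝ} (hs : 0 ≤ s) {t : ℝ} (ht : t ∈ Icc a b) :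
    ∫ x in Ω, q (t, x) ≤ ∫ x in Ω, q (t, x) * exp (s * η x) :=
  setIntegral_mono_on
    (integrableOn_of_continuousOn_closure h.isBounded (hq.continuousOn_slice ht))
    (hq.integrableOn_mul_exp h s ht) h.isOpen.measurableSet fun x hx =>
      le_mul_of_one_le_right (hq.nonneg t ht x (subset_closure hx))
        (one_le_exp (mul_nonneg hs (h.nonneg x (subset_closure hx))))

lemma integral_mul_exp_le_integral_mul {M : ℝ} (hM : ∀ x ∈ Ω, η x ≤ M) {s : ℝ} (hs : 0 ≤ s)
    {t : ℝ} (ht : t ∈ Icc a b) :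
    ∫ x in Ω, q (t, x) * exp (s * η x) ≤ (∫ x in Ω, q (t, x)) * exp (s * M) := by
  rw [← integral_mul_const]
  refine setIntegral_mono_on (hq.integrableOn_mul_exp h s ht)
    (Integrable.mul_const (integrableOn_of_continuousOn_closure h.isBounded
      (hq.continuousOn_slice ht)) _) h.isOpen.measurableSet fun x hx => ?_
  have hq_nonneg := hq.nonneg t ht x (subset_closure hx)
  gcongr
  exact hM x hx

-- `κ` is so large that the growth `exp (κ (b - a))` beats both the decay of the mass and the
-- oscillation `exp (s M)` of the weight, so the mass at time `a` is absorbed.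
lemma integral_le_mul_integral_observation (hω : MeasurableSet ω) (hωΩ : ω ⊆ Ω) {c D M : ℝ}
    (hw : IsCarlemanWeight Ω ω η c D M) {s κ : ℝ} (hs : 0 ≤ s) (hκ : 0 ≤ κ)
    (hκ_lower : A + s * D ≤ κ) (hκ_upper : 2 * κ ≤ c * s ^ 2) (hab : a ≤ b)
    (hκ_time : A * (b - a) + s * M + 1 ≤ κ * (b - a)) :
    ∫ x in Ω, q (a, x) ≤ 2 * κ * exp (κ * (b - a)) * ∫ t in a..b, ∫ x in ω, q (t, x) := by
  have ha := left_mem_Icc.2 hab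
  have hdecay : ∫ x in Ω, q (a, x) ≤
      exp (A * (b - a)) * ∫ x in Ω, q (b, x) * exp (s * η x) :=
    (hq.integral_le_exp_mul_integral h ha).trans (mul_le_mul_of_nonneg_left
      (hq.integral_le_integral_mul_exp h hs (right_mem_Icc.2 hab)) (exp_pos _).le)
  have hcarleman := hq.exp_mul_integral_weight_sub_le h hω hωΩ hw hs hκ hκ_lower hκ_upper hab
  have hweight := hq.integral_mul_exp_le_integral_mul h hw.le hs ha
  have hmass := hq.setIntegral_nonneg h.isOpen.measurableSet subset_rfl ha
  have hobs : 0 ≤ ∫ t in a..b, ∫ x in ω, q (t, x) :=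
    intervalIntegral.integral_nonneg hab fun t ht => hq.setIntegral_nonneg hω hωΩ ht
  have hgrowth : 2 * exp (s * M) * exp (A * (b - a)) ≤ exp (κ * (b - a)) := by
    have htwo : (2 : ℝ) ≤ exp 1 := by linarith [add_one_le_exp (1 : ℝ)]
    calc 2 * exp (s * M) * exp (A * (b - a)) ≤ exp 1 * exp (s * M) * exp (A * (b - a)) := by gcongr
      _ = exp (A * (b - a) + s * M + 1) := by rw [← exp_add, ← exp_add]; ring_nf
      _ ≤ exp (κ * (b - a)) := exp_le_exp.2 hκ_time
  have hsplit : exp (κ * b) = exp (κ * a) * exp (κ * (b - a)) := by rw [← exp_add]; ring_nf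
  have habsorb : exp (κ * (b - a)) * (∫ x in Ω, q (b, x) * exp (s * η x)) -
      ∫ x in Ω, q (a, x) * exp (s * η x) ≤
        exp (κ * (b - a)) * (2 * κ * exp (s * M)) * ∫ t in a..b, ∫ x in ω, q (t, x) := by
    refine le_of_mul_le_mul_left ?_ (exp_pos (κ * a))
    rw [hsplit] at hcarleman
    linarith
  have hG := exp_pos (κ * (b - a))
  refine le_of_mul_le_mul_left ?_ hG
  generalize ∫ x in Ω, q (a, x) = m at *
  generalize ∫ t in a..b, ∫ x in ω, q (t, x) = J at *
  linear_combination 2 * exp (κ * (b - a)) * hdecay + 2 * exp (A * (b - a)) * habsorb +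
    2 * exp (A * (b - a)) * hweight + (m + exp (κ * (b - a)) * (2 * κ * J)) * hgrowth

end IsNeumannBackwardHeat

lemma IsBoundedC2Domain.exists_integral_le_integral_observation (h : IsBoundedC2Domain Ω η)
    (hω : MeasurableSet ω) (hωΩ : ω ⊆ Ω) (hgrad : ∀ x ∈ closure (Ω \ ω), ∇ η x ≠ 0) :
    ∃ K > 0, ∀ A a b : ℝ, 0 ≤ A → a < b → b - a ≤ 1 →
      ∀ q q' : ℝ × E → ℝ, IsNeumannBackwardHeat Ω η A a b q q' →
        ∫ x in Ω, q (a, x) ≤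
          exp (K * observabilityExponent (b - a) A) * ∫ t in a..b, ∫ x in ω, q (t, x) := by
  obtain ⟨c, hc, D, M, hw⟩ := h.exists_isCarlemanWeight hgrad
  obtain ⟨K, hK, hparam⟩ := exists_carleman_parameters hc D M
  refine ⟨K, hK, fun A a b hA hab hab1 q q' hq => ?_⟩
  obtain ⟨s, κ, hs, hκ, hκ_lower, hκ_upper, hκ_time, hcost⟩ := hparam _ A (sub_pos.2 hab) hab1 hA
  refine (hq.integral_le_mul_integral_observation h hω hωΩ hw hs hκ hκ_lower hκ_upper hab.le
    hκ_time).trans (mul_le_mul_of_nonneg_right hcost ?_)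
  exact intervalIntegral.integral_nonneg hab.le fun t ht => hq.setIntegral_nonneg hω hωΩ ht

end ObservabilityL1

section Smoothing

open Module
open scoped Gradient Laplacian

variable {E : Type*} [NormedAddCommGroup E] [InnerProductSpace ℝ E] [FiniteDimensional ℝ E]
  [MeasurableSpace E] [BorelSpace E] {Ω : Set E} {η : E → ℝ}

-- Nash's inequality at the scale `θ τ`, with `θ` small.
lemma IsBoundedC2Domain.exists_pow_mul_integral_sq_le (h : IsBoundedC2Domain Ω η) {ε : ℝ}
    (hε : 0 < ε) :
    ∃ C > 0, ∀ τ, 0 < τ → τ ≤ 1 → ∀ u : E → ℝ, IsC1On u (closure Ω) →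
      τ ^ finrank ℝ E * ∫ x in Ω, u x ^ 2 ≤
        ε * τ ^ (finrank ℝ E + 2) * (∫ x in Ω, ‖∇ u x‖ ^ 2) + C * (∫ x in Ω, |u x|) ^ 2 := by
  obtain ⟨δ₀, hδ₀, C, hC, hnash⟩ := h.exists_nash_inequality
  obtain ⟨θ, hθ, hθδ₀, hθ1, hθε⟩ : ∃ θ > 0, θ ≤ δ₀ ∧ θ ≤ 1 ∧ C * θ ≤ ε :=
    ⟨min δ₀ (min 1 (ε / C)), by positivity, min_le_left _ _,
      (min_le_right _ _).trans (min_le_left _ _),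
      (le_div_iff₀' hC).1 ((min_le_right _ _).trans (min_le_right _ _))⟩
  have hθsq : C * θ ^ 2 ≤ ε := by nlinarith
  refine ⟨C * (θ ^ finrank ℝ E)⁻¹, by positivity, fun τ hτ hτ1 u hu => ?_⟩
  have hgrad : 0 ≤ ∫ x in Ω, ‖∇ u x‖ ^ 2 := integral_nonneg fun x => sq_nonneg _
  calc τ ^ finrank ℝ E * ∫ x in Ω, u x ^ 2
      ≤ τ ^ finrank ℝ E * (C * ((θ * τ) ^ 2 * (∫ x in Ω, ‖∇ u x‖ ^ 2) +
          ((θ * τ) ^ finrank ℝ E)⁻¹ * (∫ x in Ω, |u x|) ^ 2)) := by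
        gcongr
        exact hnash _ (by positivity) ((mul_le_of_le_one_right hθ.le hτ1).trans hθδ₀) u hu
    _ = C * θ ^ 2 * τ ^ (finrank ℝ E + 2) * (∫ x in Ω, ‖∇ u x‖ ^ 2) +
          C * (θ ^ finrank ℝ E)⁻¹ * (∫ x in Ω, |u x|) ^ 2 := by
        rw [mul_pow θ τ (finrank ℝ E), mul_inv]
        field_simp
        ring
    _ ≤ _ := by gcongr

lemma IsBoundedC2Domain.exists_finrank_add_one_mul_integral_sq_le (h : IsBoundedC2Domain Ω η) :
    ∃ C > 0, ∀ τ, 0 < τ → τ ≤ 1 → ∀ u : E → ℝ, IsC1On u (closure Ω) →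
      (finrank ℝ E + 1) * τ ^ finrank ℝ E * (∫ x in Ω, u x ^ 2) ≤
        2 * τ ^ (finrank ℝ E + 1) * (∫ x in Ω, ‖∇ u x‖ ^ 2) + C * (∫ x in Ω, |u x|) ^ 2 := by
  generalize hn : finrank ℝ E = n
  obtain ⟨C, hC, hnash⟩ := h.exists_pow_mul_integral_sq_le (ε := 2 / (n + 1)) (by positivity)
  rw [hn] at hnash
  refine ⟨(n + 1) * C, by positivity, fun τ hτ hτ1 u hu => ?_⟩
  have hgrad : 0 ≤ ∫ x in Ω, ‖∇ u x‖ ^ 2 := integral_nonneg fun x => sq_nonneg _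
  have hpow_le : τ ^ (n + 2) ≤ τ ^ (n + 1) := pow_le_pow_of_le_one hτ.le hτ1 (by omega)
  have hε : (n + 1) * (2 / (n + 1 : ℝ)) = 2 := by field_simp
  linear_combination (n + 1) * hnash τ hτ hτ1 u hu + 2 * (∫ x in Ω, ‖∇ u x‖ ^ 2) * hpow_le +
    τ ^ (n + 2) * (∫ x in Ω, ‖∇ u x‖ ^ 2) * hε

namespace IsNeumannBackwardHeat

variable {A a b : ℝ} {q q' : ℝ × E → ℝ} (hq : IsNeumannBackwardHeat Ω η A a b q q')

include hq

lemma continuousOn_integral_sq (h : IsBoundedC2Domain Ω η) {S : Set E} (hS : MeasurableSet S)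
    (hSΩ : S ⊆ Ω) : ContinuousOn (fun t => ∫ x in S, q (t, x) ^ 2) (Icc a b) :=
  continuousOn_setIntegral_prodMk hS h.isBounded.isCompact_closure (hSΩ.trans subset_closure)
    isCompact_Icc (f := fun p => q p ^ 2) (hq.continuousOn.pow 2)

lemma hasDerivAt_integral_sq (h : IsBoundedC2Domain Ω η) {t : ℝ} (ht : t ∈ Ioo a b) :
    HasDerivAt (fun t => ∫ x in Ω, q (t, x) ^ 2) (∫ x in Ω, 2 * q (t, x) * q' (t, x)) t :=
  hasDerivAt_setIntegral_prodMk h.isOpen.measurableSet h.isBounded.isCompact_closure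
    subset_closure isOpen_Ioo (f := fun p => q p ^ 2) (f' := fun p => 2 * q p * q' p)
    (hq.continuousOn_Ioo.pow 2) ((hq.continuousOn_Ioo.const_mul 2).mul hq.continuousOn_deriv)
    (fun t ht x hx => by simpa using (hq.hasDerivAt t ht x hx).fun_pow 2) ht

lemma integral_norm_gradient_sq_sub_le (h : IsBoundedC2Domain Ω η) {t : ℝ} (ht : t ∈ Ioo a b) :
    2 * (∫ x in Ω, ‖∇ (fun y => q (t, y)) x‖ ^ 2) - 2 * A * (∫ x in Ω, q (t, x) ^ 2) ≤
      ∫ x in Ω, 2 * q (t, x) * q' (t, x) := by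
  have ht' := Ioo_subset_Icc_self ht
  have hcont := hq.continuousOn_slice ht'
  have hint {f : E → ℝ} (hf : ContinuousOn f (closure Ω)) : IntegrableOn f Ω :=
    integrableOn_of_continuousOn_closure h.isBounded hf
  have hsq : IntegrableOn (fun x => q (t, x) ^ 2) Ω := hint (hcont.pow 2)
  have hlap : IntegrableOn (fun x => q (t, x) * Δ (fun y => q (t, y)) x) Ω :=
    hint (hcont.mul (hq.continuousOn_laplacian_slice ht))
  calc 2 * (∫ x in Ω, ‖∇ (fun y => q (t, y)) x‖ ^ 2) - 2 * A * (∫ x in Ω, q (t, x) ^ 2)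
      = ∫ x in Ω, (-2 * (q (t, x) * Δ (fun y => q (t, y)) x) - 2 * A * q (t, x) ^ 2) := by
        rw [integral_sub (hlap.const_mul (-2)) (hsq.const_mul (2 * A)), integral_const_mul,
          integral_const_mul, h.integral_self_mul_laplacian (hq.isC2On t ht) (hq.neumann t ht)]
        ring
    _ ≤ ∫ x in Ω, 2 * q (t, x) * q' (t, x) := by
        refine setIntegral_mono_on ((hlap.const_mul (-2)).sub (hsq.const_mul (2 * A)))
          (hint ((hcont.const_mul 2).mul (hq.continuousOn_deriv_slice ht)))
          h.isOpen.measurableSet fun x hx => ?_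
        linear_combination 2 * mul_le_mul_of_nonneg_left
          (abs_le.1 (hq.abs_add_laplacian_le t ht x hx)).1 (hq.nonneg t ht' x (subset_closure hx))

lemma sq_integral_abs_le (h : IsBoundedC2Domain Ω η) {t : ℝ} (ht : t ∈ Icc a b) :
    (∫ x in Ω, |q (t, x)|) ^ 2 ≤ exp (2 * A * (b - t)) * (∫ x in Ω, q (b, x)) ^ 2 := by
  have hΩ := h.isOpen.measurableSet
  rw [setIntegral_congr_fun hΩ fun x hx => abs_of_nonneg (hq.nonneg t ht x (subset_closure hx)),
    mul_assoc, two_mul, exp_add, ← sq, ← mul_pow]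
  exact pow_le_pow_left₀ (hq.setIntegral_nonneg hΩ subset_rfl ht)
    (hq.integral_le_exp_mul_integral h ht) 2

end IsNeumannBackwardHeat

-- Grönwall's inequality for `(b - t) ^ (n + 1) * ∫ q(t)²`: by the Nash inequality the derivative
-- of the power is absorbed by the dissipation.
lemma IsBoundedC2Domain.exists_pow_mul_integral_sq_le_sq_integral (h : IsBoundedC2Domain Ω η) :
    ∃ C > 0, ∀ A a b : ℝ, a < b → b - a ≤ 1 →
      ∀ q q' : ℝ × E → ℝ, IsNeumannBackwardHeat Ω η A a b q q' →
        (b - a) ^ finrank ℝ E * ∫ x in Ω, q (a, x) ^ 2 ≤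
          C * exp (2 * A * (b - a)) * (∫ x in Ω, q (b, x)) ^ 2 := by
  obtain ⟨C, hC, hnash⟩ := h.exists_finrank_add_one_mul_integral_sq_le
  generalize finrank ℝ E = n at hnash ⊢
  refine ⟨C, hC, fun A a b hab hab1 q q' hq => ?_⟩
  have hpow (t : ℝ) : HasDerivAt (fun t => (b - t) ^ (n + 1)) (-((n + 1) * (b - t) ^ n)) t := by
    simpa using ((hasDerivAt_id t).const_sub b).fun_pow (n + 1)
  have hgronwall := exp_mul_sub_exp_mul_le hab.le (κ := 2 * A)
    (F := fun t => -((b - t) ^ (n + 1) * ∫ x in Ω, q (t, x) ^ 2))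
    (((by fun_prop : Continuous fun t => (b - t) ^ (n + 1)).continuousOn.mul
      (hq.continuousOn_integral_sq h h.isOpen.measurableSet subset_rfl)).neg)
    (fun t ht => ((hpow t).mul (hq.hasDerivAt_integral_sq h ht)).neg)
    (c := C * (∫ x in Ω, q (b, x)) ^ 2) fun t ht => ?_
  · have hsplit : exp (2 * A * b) = exp (2 * A * a) * exp (2 * A * (b - a)) := by
      rw [← exp_add]; ring_nf
    rw [sub_self, zero_pow n.succ_ne_zero, hsplit] at hgronwall
    refine le_of_mul_le_mul_left ?_ (mul_pos (sub_pos.2 hab) (exp_pos (2 * A * a)))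
    linear_combination hgronwall
  have hτ : 0 < b - t := sub_pos.2 ht.2
  have hdissipation := hnash _ hτ (by linarith [ht.1]) _ (hq.isC2On t ht).isC1On
  have henergy := hq.integral_norm_gradient_sq_sub_le h ht
  have hmass := hq.sq_integral_abs_le h (Ioo_subset_Icc_self ht)
  linear_combination hdissipation + (b - t) ^ (n + 1) * henergy + C * hmass

end Smoothing

section Potential

open scoped Gradient Laplacian

lemma frontier_subset_closure_diff {X : Type*} [TopologicalSpace X] {U S : Set X} (hU : IsOpen U)
    (hS : closure S ⊆ U) : frontier U ⊆ closure (U \ S) := by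
  intro x hx
  rw [hU.frontier_eq] at hx
  have hclosure : x ∈ closure (U \ S) ∪ closure S := by
    rw [← closure_union]
    exact closure_mono (fun y hy => by by_cases hyS : y ∈ S <;> simp [hy, hyS]) hx.1
  exact hclosure.resolve_right fun hxS => hx.2 (hS hxS)

lemma spaceLaplacian_eq_laplacian {N : ℕ} {f : EuclideanSpace ℝ (Fin N) → ℝ}
    {x : EuclideanSpace ℝ (Fin N)} (hf : DifferentiableAt ℝ (fderiv ℝ f) x) :
    spaceLaplacian f x = Δ f x := by
  rw [laplacian_eq_sum_fderiv_fderiv (EuclideanSpace.basisFun (Fin N) ℝ), spaceLaplacian]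
  refine Finset.sum_congr rfl fun i _ => ?_
  rw [EuclideanSpace.basisFun_apply, fderiv_clm_apply hf (differentiableAt_const _)]
  simp

section OpenPos

variable {X : Type*} [TopologicalSpace X] [MeasurableSpace X] {μ : Measure X}
  [μ.IsOpenPosMeasure] {U : Set X}

lemma le_on_open_of_ae_le {f g : X → ℝ} (hU : IsOpen U) (hf : ContinuousOn f U)
    (hg : ContinuousOn g U) (hle : f ≤ᵐ[μ.restrict U] g) : ∀ x ∈ U, f x ≤ g x := fun _ hx =>
  sup_eq_right.1 <| Measure.eqOn_open_of_ae_eq (f := f ⊔ g)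
    (hle.mono fun _ => sup_eq_right.2) hU (hf.sup hg) hg hx

lemma abs_mul_le_eLpNorm_top_mul [OpensMeasurableSpace X] {V q : X → ℝ} (hU : IsOpen U)
    (hV : eLpNorm V ⊤ (μ.restrict U) ≠ ⊤) (hq : ContinuousOn q U) (hq_nonneg : ∀ x ∈ U, 0 ≤ q x)
    (hVq : ContinuousOn (fun x => V x * q x) U) :
    ∀ x ∈ U, |V x * q x| ≤ (eLpNorm V ⊤ (μ.restrict U)).toReal * q x := by
  refine le_on_open_of_ae_le (μ := μ) hU hVq.abs (hq.const_mul _) ?_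
  filter_upwards [ae_le_eLpNormEssSup (f := V) (μ := μ.restrict U),
    ae_restrict_mem hU.measurableSet] with x hx hxU
  rw [← eLpNorm_exponent_top] at hx
  have hVx : |V x| ≤ (eLpNorm V ⊤ (μ.restrict U)).toReal := by
    simpa only [toReal_enorm, norm_eq_abs] using ENNReal.toReal_mono hV hx
  rw [abs_mul, abs_of_nonneg (hq_nonneg x hxU)]
  exact mul_le_mul_of_nonneg_right hVx (hq_nonneg x hxU)

end OpenPos

variable {E : Type*} [NormedAddCommGroup E] [InnerProductSpace ℝ E] [FiniteDimensional ℝ E]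

lemma continuousOn_laplacian_slice {X : Type*} [TopologicalSpace X] {q : X × E → ℝ}
    {S : Set (X × E)}
    (hq : ContinuousOn (fun p : X × E => fderiv ℝ (fderiv ℝ fun x => q (p.1, x)) p.2) S) :
    ContinuousOn (fun p : X × E => Δ (fun x => q (p.1, x)) p.2) S := by
  simp only [laplacian_eq_sum_fderiv_fderiv (stdOrthonormalBasis ℝ E)]
  exact continuousOn_finsetSum _ fun i _ =>
    (hq.clm_apply continuousOn_const).clm_apply continuousOn_const

-- The equation exhibits `V q` as a continuous function, so that the essential bound on `V` holds
-- pointwise once multiplied by `q`.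
lemma isNeumannBackwardHeat_of_potential [MeasurableSpace E] [BorelSpace E] {Ω : Set E} {η : E → ℝ}
    {a b : ℝ} {q q' V : ℝ × E → ℝ} (hΩ : IsOpen Ω)
    (hV : ∃ B, ∀ p ∈ Ioo a b ×ˢ Ω, |V p| ≤ B)
    (hq : ContinuousOn q (Icc a b ×ˢ closure Ω))
    (hq_nonneg : ∀ p ∈ Icc a b ×ˢ closure Ω, 0 ≤ q p)
    (hq' : ∀ p ∈ Ioo a b ×ˢ closure Ω, HasDerivAt (fun τ => q (τ, p.2)) (q' p) p.1)
    (hq'_cont : ContinuousOn q' (Ioo a b ×ˢ closure Ω))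
    (hdiff : ∀ p ∈ Ioo a b ×ˢ closure Ω, DifferentiableAt ℝ (fun x => q (p.1, x)) p.2)
    (hdiff₂ : ∀ p ∈ Ioo a b ×ˢ closure Ω,
      DifferentiableAt ℝ (fderiv ℝ fun x => q (p.1, x)) p.2)
    (hfderiv : ContinuousOn (fun p : ℝ × E => fderiv ℝ (fun x => q (p.1, x)) p.2)
      (Ioo a b ×ˢ closure Ω))
    (hfderiv₂ : ContinuousOn (fun p : ℝ × E => fderiv ℝ (fderiv ℝ fun x => q (p.1, x)) p.2)
      (Ioo a b ×ˢ closure Ω))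
    (hheat : ∀ t ∈ Ioo a b, ∀ x ∈ Ω,
      -q' (t, x) - Δ (fun y => q (t, y)) x + V (t, x) * q (t, x) = 0)
    (hneumann : ∀ t ∈ Ioo a b, ∀ x ∈ frontier Ω, ⟪∇ (fun y => q (t, y)) x, ∇ η x⟫ = 0) :
    IsNeumannBackwardHeat Ω η (eLpNorm V ⊤ (volume.restrict (Ioo a b ×ˢ Ω))).toReal a b q q' := by
  have hU : IsOpen (Ioo a b ×ˢ Ω) := isOpen_Ioo.prod hΩ
  have hU_sub : Ioo a b ×ˢ Ω ⊆ Ioo a b ×ˢ closure Ω := prod_mono_right subset_closure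
  have hU_sub' : Ioo a b ×ˢ Ω ⊆ Icc a b ×ˢ closure Ω := prod_mono Ioo_subset_Icc_self subset_closure
  have hVq : ∀ p ∈ Ioo a b ×ˢ Ω, V p * q p = q' p + Δ (fun y => q (p.1, y)) p.2 := fun p hp => by
    linear_combination hheat p.1 hp.1 p.2 hp.2
  have hVq_cont : ContinuousOn (fun p => V p * q p) (Ioo a b ×ˢ Ω) :=
    ((hq'_cont.add (continuousOn_laplacian_slice hfderiv₂)).mono hU_sub).congr hVq
  have hV_top : eLpNorm V ⊤ (volume.restrict (Ioo a b ×ˢ Ω)) ≠ ⊤ := by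
    obtain ⟨B, hB⟩ := hV
    rw [eLpNorm_exponent_top]
    exact (eLpNormEssSup_lt_top_of_ae_bound (ae_restrict_of_forall_mem hU.measurableSet hB)).ne
  have hbound := abs_mul_le_eLpNorm_top_mul hU hV_top (hq.mono hU_sub')
    (fun p hp => hq_nonneg p (hU_sub' hp)) hVq_cont
  have hslice {t : ℝ} (ht : t ∈ Ioo a b) :
      MapsTo (fun x => (t, x)) (closure Ω) (Ioo a b ×ˢ closure Ω) := fun x hx => ⟨ht, hx⟩
  exact
  { continuousOn := hq
    nonneg := fun t ht x hx => hq_nonneg (t, x) ⟨ht, hx⟩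
    hasDerivAt := fun t ht x hx => hq' (t, x) ⟨ht, hx⟩
    continuousOn_deriv := hq'_cont
    isC2On := fun t ht =>
      ⟨⟨fun x hx => hdiff (t, x) ⟨ht, hx⟩, hfderiv.comp (by fun_prop) (hslice ht)⟩,
        fun x hx => hdiff₂ (t, x) ⟨ht, hx⟩, hfderiv₂.comp (by fun_prop) (hslice ht)⟩
    abs_add_laplacian_le := fun t ht x hx => by
      simpa only [hVq (t, x) ⟨ht, hx⟩] using hbound (t, x) ⟨ht, hx⟩
    neumann := hneumann }

end Potential

section ObservabilityL2

open Module
open scoped Gradient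

variable {E : Type*} [NormedAddCommGroup E] [InnerProductSpace ℝ E] [FiniteDimensional ℝ E]
  [MeasurableSpace E] [BorelSpace E] {Ω ω : Set E} {η : E → ℝ}

lemma observabilityExponent_min_le {T A : ℝ} (hT : 0 < T) (hA : 0 ≤ A) :
    observabilityExponent (min T 1 / 2) A ≤ 3 * observabilityExponent T A := by
  have hτT : min T 1 / 2 ≤ T := by linarith [min_le_left T 1]
  have hinv : 1 / (min T 1 / 2) ≤ 2 + 2 * (1 / T) := by
    have hτ : 0 < min T 1 := by positivity
    rcases min_choice T 1 with hmin | hmin <;> rw [hmin] <;> field_simp <;> linarith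
  have hpos := one_div_pos.2 hT
  simp only [observabilityExponent]
  linarith [mul_le_mul_of_nonneg_right hτT hA, mul_nonneg hT.le hA, sqrt_nonneg A]

lemma inv_pow_mul_mul_exp_le {τ A c : ℝ} (hτ : 0 < τ) (hA : 0 ≤ A) (hc : 0 ≤ c) (n : ℕ) :
    (τ ^ n)⁻¹ * c * exp (2 * A * τ) ≤ exp ((n + c + 2) * observabilityExponent τ A) := by
  have hinv : (τ ^ n)⁻¹ ≤ exp (n * (1 / τ)) := by
    rw [exp_nat_mul, ← inv_pow, one_div]
    gcongr
    linarith [add_one_le_exp τ⁻¹]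
  have hc_exp : c ≤ exp c := by linarith [add_one_le_exp c]
  calc (τ ^ n)⁻¹ * c * exp (2 * A * τ)
      ≤ exp (n * (1 / τ)) * exp c * exp (2 * A * τ) := by gcongr
    _ = exp (n * (1 / τ) + c + 2 * A * τ) := by rw [exp_add, exp_add]
    _ ≤ exp ((n + c + 2) * observabilityExponent τ A) := by
        rw [exp_le_exp, observabilityExponent]
        have hrest : 0 ≤ n * (1 + τ * A + √A) + c * (1 / τ + τ * A + √A) +
          2 * (1 + 1 / τ + √A) := by positivity
        linear_combination hrest

lemma sq_intervalIntegral_setIntegral_le {X : Type*} [TopologicalSpace X] [MeasurableSpace X]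
    [T2Space X] [OpensMeasurableSpace X] {μ : Measure X} [IsFiniteMeasureOnCompacts μ]
    {S K : Set X} (hS : MeasurableSet S) (hK : IsCompact K) (hSK : S ⊆ K) {a b : ℝ} (hab : a ≤ b)
    {f : ℝ × X → ℝ} (hf : ContinuousOn f (Icc a b ×ˢ K)) :
    (∫ t in a..b, ∫ x in S, f (t, x) ∂μ) ^ 2 ≤
      (b - a) * (μ.real S * ∫ t in a..b, ∫ x in S, f (t, x) ^ 2 ∂μ) := by
  have hμ : μ S < ⊤ := (measure_mono hSK).trans_lt hK.measure_lt_top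
  have : IsFiniteMeasure (μ.restrict S) := isFiniteMeasure_restrict.2 hμ.ne
  have hint : ContinuousOn (fun t => ∫ x in S, f (t, x) ∂μ) (Icc a b) :=
    continuousOn_setIntegral_prodMk hS hK hSK isCompact_Icc hf
  have hint_sq : ContinuousOn (fun t => ∫ x in S, f (t, x) ^ 2 ∂μ) (Icc a b) :=
    continuousOn_setIntegral_prodMk hS hK hSK isCompact_Icc (f := fun p => f p ^ 2) (hf.pow 2)
  have htime : (∫ t in a..b, ∫ x in S, f (t, x) ∂μ) ^ 2 ≤
      (b - a) * ∫ t in a..b, (∫ x in S, f (t, x) ∂μ) ^ 2 := by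
    have hLp : MemLp (fun t => ∫ x in S, f (t, x) ∂μ) 2 (volume.restrict (Ioc a b)) :=
      (memLp_two_iff_integrable_sq
        ((hint.mono Ioc_subset_Icc_self).aestronglyMeasurable measurableSet_Ioc)).2
        ((hint.pow 2).integrableOn_Icc.mono_set Ioc_subset_Icc_self)
    simpa [intervalIntegral.integral_of_le hab, hab] using
      sq_integral_le_measureReal_mul_integral_sq hLp
  refine htime.trans (mul_le_mul_of_nonneg_left ?_ (sub_nonneg.2 hab))
  rw [← intervalIntegral.integral_const_mul]
  refine intervalIntegral.integral_mono_on hab ((hint.pow 2).intervalIntegrable_of_Icc hab)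
    ((hint_sq.const_mul _).intervalIntegrable_of_Icc hab) fun t ht => ?_
  have hslice : ContinuousOn (fun x => f (t, x)) K := hf.comp (by fun_prop) fun x hx => ⟨ht, hx⟩
  have hLp : MemLp (fun x => f (t, x)) 2 (μ.restrict S) :=
    (memLp_two_iff_integrable_sq ((hslice.mono hSK).aestronglyMeasurable hS)).2
      (((hslice.pow 2).integrableOn_compact hK).mono_set hSK)
  simpa using sq_integral_le_measureReal_mul_integral_sq hLp

lemma IsBoundedC2Domain.exists_sq_integral_le_integral_observation_sq (h : IsBoundedC2Domain Ω η)
    (hω : MeasurableSet ω) (hωΩ : ω ⊆ Ω) (hgrad : ∀ x ∈ closure (Ω \ ω), ∇ η x ≠ 0) :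
    ∃ K > 0, ∀ A a b : ℝ, 0 ≤ A → a < b → b - a ≤ 1 →
      ∀ q q' : ℝ × E → ℝ, IsNeumannBackwardHeat Ω η A a b q q' →
        (∫ x in Ω, q (a, x)) ^ 2 ≤ exp (2 * K * observabilityExponent (b - a) A) *
          (volume.real ω * ∫ t in a..b, ∫ x in ω, q (t, x) ^ 2) := by
  obtain ⟨K, hK, hobs⟩ := h.exists_integral_le_integral_observation hω hωΩ hgrad
  refine ⟨K, hK, fun A a b hA hab hab1 q q' hq => ?_⟩
  have hmass_nonneg := hq.setIntegral_nonneg h.isOpen.measurableSet subset_rfl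
    (left_mem_Icc.2 hab.le)
  have hI : 0 ≤ ∫ t in a..b, ∫ x in ω, q (t, x) ^ 2 :=
    intervalIntegral.integral_nonneg hab.le fun t _ => integral_nonneg fun x => sq_nonneg _
  calc (∫ x in Ω, q (a, x)) ^ 2
      ≤ (exp (K * observabilityExponent (b - a) A) *
          ∫ t in a..b, ∫ x in ω, q (t, x)) ^ 2 := by
        gcongr
        exact hobs A a b hA hab hab1 q q' hq
    _ = exp (2 * K * observabilityExponent (b - a) A) *
          (∫ t in a..b, ∫ x in ω, q (t, x)) ^ 2 := by
        rw [mul_pow, ← exp_nat_mul, Nat.cast_ofNat, mul_assoc 2 K]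
    _ ≤ exp (2 * K * observabilityExponent (b - a) A) *
          (volume.real ω * ∫ t in a..b, ∫ x in ω, q (t, x) ^ 2) := by
        gcongr
        exact (sq_intervalIntegral_setIntegral_le hω h.isBounded.isCompact_closure
          (hωΩ.trans subset_closure) hab.le hq.continuousOn).trans
          (mul_le_of_le_one_left (by positivity) hab1)

-- The first half of the time interval turns the `L²` norm into the mass, which is observed during
-- the second half.
lemma IsBoundedC2Domain.exists_integral_sq_le_integral_observation (h : IsBoundedC2Domain Ω η)
    (hω : MeasurableSet ω) (hωΩ : ω ⊆ Ω) (hgrad : ∀ x ∈ closure (Ω \ ω), ∇ η x ≠ 0) :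
    ∃ K > 0, ∀ A a τ : ℝ, 0 ≤ A → 0 < τ → τ ≤ 1 →
      ∀ q q' : ℝ × E → ℝ, IsNeumannBackwardHeat Ω η A a (a + 2 * τ) q q' →
        ∫ x in Ω, q (a, x) ^ 2 ≤ exp (K * observabilityExponent τ A) *
          ∫ t in (a + τ)..(a + 2 * τ), ∫ x in ω, q (t, x) ^ 2 := by
  obtain ⟨C, hC, hsmoothing⟩ := h.exists_pow_mul_integral_sq_le_sq_integral
  obtain ⟨K, hK, hobs⟩ := h.exists_sq_integral_le_integral_observation_sq hω hωΩ hgrad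
  refine ⟨finrank ℝ E + C * volume.real ω + 2 + 2 * K, by positivity,
    fun A a τ hA hτ hτ1 q q' hq => ?_⟩
  have hsmooth := hsmoothing A a (a + τ) (by linarith) (by linarith) q q'
    (hq.mono le_rfl (by linarith))
  have hmass := hobs A (a + τ) (a + 2 * τ) hA (by linarith) (by linarith) q q'
    (hq.mono (by linarith) le_rfl)
  rw [add_sub_cancel_left] at hsmooth
  rw [add_sub_add_left_eq_sub, two_mul τ, add_sub_cancel_right, ← two_mul] at hmass
  have hI : 0 ≤ ∫ t in (a + τ)..(a + 2 * τ), ∫ x in ω, q (t, x) ^ 2 :=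
    intervalIntegral.integral_nonneg (by linarith) fun t _ => integral_nonneg fun x => sq_nonneg _
  have hcost := inv_pow_mul_mul_exp_le hτ hA (c := C * volume.real ω) (by positivity) (finrank ℝ E)
  generalize ∫ t in (a + τ)..(a + 2 * τ), ∫ x in ω, q (t, x) ^ 2 = I at *
  generalize observabilityExponent τ A = Z at *
  calc ∫ x in Ω, q (a, x) ^ 2
      ≤ (τ ^ finrank ℝ E)⁻¹ * (C * exp (2 * A * τ) * (∫ x in Ω, q (a + τ, x)) ^ 2) :=
        (le_inv_mul_iff₀ (by positivity)).2 hsmooth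
    _ ≤ (τ ^ finrank ℝ E)⁻¹ * (C * exp (2 * A * τ) *
          (exp (2 * K * Z) * (volume.real ω * I))) := by gcongr
    _ = (τ ^ finrank ℝ E)⁻¹ * (C * volume.real ω) * exp (2 * A * τ) * exp (2 * K * Z) * I := by
        ring
    _ ≤ exp ((finrank ℝ E + C * volume.real ω + 2) * Z) * exp (2 * K * Z) * I := by gcongr
    _ = exp ((finrank ℝ E + C * volume.real ω + 2 + 2 * K) * Z) * I := by
        rw [← exp_add, ← add_mul]

theorem observability_L2_L2_neumann_general (h : IsBoundedC2Domain Ω η)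
    (hω : MeasurableSet ω) (hωΩ : ω ⊆ Ω) (hgrad : ∀ x ∈ closure (Ω \ ω), ∇ η x ≠ 0) :
    ∃ C > 0, ∀ T A : ℝ, 0 < T → 0 ≤ A →
      ∀ q q' : ℝ × E → ℝ, IsNeumannBackwardHeat Ω η A 0 T q q' →
        ∫ x in Ω, q (0, x) ^ 2 ≤ exp (C * observabilityExponent T A) *
          ∫ t in Ioo 0 T, ∫ x in ω, q (t, x) ^ 2 := by
  obtain ⟨K, hK, hobs⟩ := h.exists_integral_sq_le_integral_observation hω hωΩ hgrad
  refine ⟨3 * K, by positivity, fun T A hT hA q q' hq => ?_⟩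
  have hτ : 0 < min T 1 / 2 := by positivity
  have hτT : 0 + 2 * (min T 1 / 2) ≤ T := by linarith [min_le_left T 1]
  have hsq_nonneg (t : ℝ) : 0 ≤ ∫ x in ω, q (t, x) ^ 2 := integral_nonneg fun x => sq_nonneg _
  refine (hobs A 0 _ hA hτ (by linarith [min_le_right T 1]) q q' (hq.mono le_rfl hτT)).trans ?_
  have hexponent : K * observabilityExponent (min T 1 / 2) A ≤
      3 * K * observabilityExponent T A := by
    linear_combination K * observabilityExponent_min_le hT hA
  rw [← integral_Ioc_eq_integral_Ioo, ← intervalIntegral.integral_of_le hT.le]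
  gcongr
  · exact intervalIntegral.integral_nonneg (by linarith) fun t _ => hsq_nonneg t
  · exact intervalIntegral.integral_mono_interval (by linarith) (by linarith) hτT
      (Filter.Eventually.of_forall hsq_nonneg)
      ((hq.continuousOn_integral_sq h hω hωΩ).intervalIntegrable_of_Icc hT.le)

end ObservabilityL2

theorem observability_L2_L2_neumann
    (N : ℕ) (hN : 1 ≤ N)
    (Ω ω₀ ω : Set (EuclideanSpace ℝ (Fin N)))
    (hΩo : IsOpen Ω) (hΩb : Bornology.IsBounded Ω) (hΩc : IsConnected Ω)
    (hω₀o : IsOpen ω₀) (hω₀ne : ω₀.Nonempty) (hωo : IsOpen ω) (hωne : ω.Nonempty)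
    (hω₀ω : closure ω₀ ⊆ ω) (hωΩ : ω ⊆ Ω)
    (η : EuclideanSpace ℝ (Fin N) → ℝ) (hη : ContDiff ℝ 2 η)
    (hηpos : ∀ x ∈ Ω, 0 < η x) (hηbd : ∀ x ∈ frontier Ω, η x = 0)
    (hηgrad : ∀ x ∈ closure (Ω \ ω₀), 0 < ‖gradient η x‖) :
    ∃ C > (0:ℝ),
      ∀ T : ℝ, 0 < T →
      ∀ a : ℝ × EuclideanSpace ℝ (Fin N) → ℝ, Measurable a →
      (∃ B : ℝ, ∀ p ∈ Set.Ioo (0:ℝ) T ×ˢ Ω, |a p| ≤ B) →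
      ∀ q qt : ℝ × EuclideanSpace ℝ (Fin N) → ℝ,
        ContinuousOn q (Set.Icc 0 T ×ˢ closure Ω) →
        (∀ p ∈ Set.Icc 0 T ×ˢ closure Ω, 0 ≤ q p) →
        (∀ p ∈ Set.Ioo 0 T ×ˢ closure Ω,
          HasDerivAt (fun τ => q (τ, p.2)) (qt p) p.1) →
        ContinuousOn qt (Set.Ioo 0 T ×ˢ closure Ω) →
        (∀ p ∈ Set.Ioo 0 T ×ˢ closure Ω,
          DifferentiableAt ℝ (fun z => q (p.1, z)) p.2) →
        (∀ p ∈ Set.Ioo 0 T ×ˢ closure Ω,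
          DifferentiableAt ℝ (fun y => fderiv ℝ (fun z => q (p.1, z)) y) p.2) →
        ContinuousOn (fun p : ℝ × EuclideanSpace ℝ (Fin N) =>
          fderiv ℝ (fun z => q (p.1, z)) p.2) (Set.Ioo 0 T ×ˢ closure Ω) →
        ContinuousOn (fun p : ℝ × EuclideanSpace ℝ (Fin N) =>
          fderiv ℝ (fun y => fderiv ℝ (fun z => q (p.1, z)) y) p.2)
          (Set.Ioo 0 T ×ˢ closure Ω) →
        (∀ t ∈ Set.Ioo (0:ℝ) T, ∀ x ∈ Ω,
          -qt (t, x) - spaceLaplacian (fun z => q (t, z)) x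
            + a (t, x) * q (t, x) = 0) →
        (∀ t ∈ Set.Ioo (0:ℝ) T, ∀ x ∈ frontier Ω,
          ⟪gradient (fun z => q (t, z)) x, gradient η x⟫ = 0) →
        (∫ x in Ω, q (0, x) ^ 2)
          ≤ Real.exp (C * (1 + 1/T + T * (eLpNorm a ⊤ (volume.restrict (Set.Ioo (0:ℝ) T ×ˢ Ω))).toReal + Real.sqrt (eLpNorm a ⊤ (volume.restrict (Set.Ioo (0:ℝ) T ×ˢ Ω))).toReal)) *
            ∫ t in Set.Ioo (0:ℝ) T, ∫ x in ω, q (t, x) ^ 2 := by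
  have hω₀Ω : closure ω₀ ⊆ Ω := hω₀ω.trans hωΩ
  have hdomain : IsBoundedC2Domain Ω η := ⟨hΩo, hΩb, hη, hηpos, hηbd, fun x hx =>
    norm_pos_iff.1 (hηgrad x (frontier_subset_closure_diff hΩo hω₀Ω hx))⟩
  have hgrad : ∀ x ∈ closure (Ω \ ω), gradient η x ≠ 0 := fun x hx =>
    norm_pos_iff.1 (hηgrad x (closure_mono (sdiff_subset_sdiff_right
      (subset_closure.trans hω₀ω)) hx))
  obtain ⟨C, hC, hobs⟩ :=
    observability_L2_L2_neumann_general hdomain hωo.measurableSet hωΩ hgrad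
  refine ⟨C, hC, fun T hT a _ ha q qt hq hq_nonneg hqt hqt_cont hdiff hdiff₂ hfderiv hfderiv₂ hheat
    hneumann => ?_⟩
  exact hobs T _ hT ENNReal.toReal_nonneg q qt <|
    isNeumannBackwardHeat_of_potential hΩo ha hq hq_nonneg hqt hqt_cont hdiff hdiff₂ hfderiv
      hfderiv₂ (fun t ht x hx => by
        rw [← spaceLaplacian_eq_laplacian (hdiff₂ (t, x) ⟨ht, subset_closure hx⟩)]
        exact hheat t ht x hx) hneumann
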